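/- arXiv:1801.00367 — 3 statements merged into one kernel-verified Lean document; each statement's English description precedes it below -/
import Mathlib

section
/- For every q > 1 and every γ > 0, there exist R > 0 and a positive radial solution u of (E) on (0,R] that extends continuously to r = 0 with lim_{r→0⁺} u(r) = γ. Moreover this solution is unique in the following sense: if u₁ is a positive radial solution of (E) on (0,R₁] and u₂ is a positive radial solution of (E) on (0,R₂], with lim_{r→0⁺} u₁(r) = lim_{r→0⁺} u₂(r) = γ, then u₁ = u₂ on (0, min(R₁,R₂)]. -/
/-!
Write `n = k + 2` and put the equation in the form `u'' + ((k + 1) / r) u' = f(r, u)`, where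
`f(r, x) = μ x ^ q - r ^ (-s) x ^ (2*(s) - 1)`. Since `s < 2`, the weight `r * r ^ (-s)` is
integrable at `0`, and the linear equation with source `g = O(r ^ (-s))` has an explicit solution
vanishing at `0`, the radial potential `radialPot k g`, of size `O(r ^ (2 - s))`
(`hasDerivAt_radialPot`, `hasDerivAt_radialPot_deriv`, `abs_radialPot_le`).

Existence: on a compact subinterval of `(0, ∞)` around `γ`, `f(r, ·)` is bounded and Lipschitz with
constants `O(r ^ (-s))` (`nonlin_estimates`). With `f` truncated in `u` to that subinterval, the map
`v ↦ γ + radialPot k (f(·, v))` contracts `C([0, R])` for small `R`, and its fixed point stays so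
close to `γ` that the truncation is inactive (`exists_integral_solution`).

Uniqueness: if `w` is the difference of two solutions with the same limit and `g` the difference of
their sources, then `w - radialPot k g` is a radial harmonic function tending to `0`, hence zero
(`eq_zero_of_radial_harmonic`). So no bound on the derivatives near `0` has to be assumed, and
`|w(r)| ≤ C ∫₀ʳ t ^ (1 - s) |w(t)| dt`; a Gronwall argument gives `w = 0` on the whole common
interval (`singular_gronwall`).
-/

open Filter Set Real
open scoped Topology

noncomputable section

/-- The critical Hardy–Sobolev exponent `2*(s) = 2(n-s)/(n-2)`. -/
def twoStarS (n : ℕ) (s : ℝ) : ℝ := 2 * ((n : ℝ) - s) / ((n : ℝ) - 2)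

/-- The radial form of the equation `-Δu = |x|^{-s} u^{2*(s)-1} - μ u^q` at a point `r`. -/
def radialEq (n : ℕ) (s μ q : ℝ) (u : ℝ → ℝ) (r : ℝ) : Prop :=
  deriv (deriv u) r + (((n : ℝ) - 1) / r) * deriv u r
    + r ^ (-s) * u r ^ (twoStarS n s - 1) - μ * u r ^ q = 0

/-- A positive radial solution of (E) on a set `I ⊆ (0,∞)`. -/
def IsRadialSol (n : ℕ) (s μ q : ℝ) (I : Set ℝ) (u : ℝ → ℝ) : Prop :=
  ContDiffOn ℝ 2 u I ∧ (∀ r ∈ I, 0 < u r) ∧ ∀ r ∈ I, radialEq n s μ q u r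

open MeasureTheory intervalIntegral

/-! ### The radial potential -/

/-- The solution `v` of `v'' + ((k + 1) / r) v' = g` with `v(0) = 0` that is regular at the origin,
in dimension `n = k + 2`. Integrating `(r ^ (k + 1) v')' = r ^ (k + 1) g` twice from `0` and
exchanging the order of integration leaves two single integrals, so only the integrability of
`t * g t` near `0` is needed. At `r = 0` the value is `0`. -/
def radialPot (k : ℕ) (g : ℝ → ℝ) (r : ℝ) : ℝ :=
  ((∫ t in (0 : ℝ)..r, t * g t) - (r ^ k)⁻¹ * ∫ t in (0 : ℝ)..r, t ^ (k + 1) * g t) / k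

lemma intervalIntegrable_of_continuousOn_Ioo {f W : ℝ → ℝ} {b : ℝ} (hb : 0 ≤ b)
    (hf : ContinuousOn f (Ioo 0 b)) (hW : IntervalIntegrable W volume 0 b)
    (h : ∀ t ∈ Ioo 0 b, |f t| ≤ W t) : IntervalIntegrable f volume 0 b := by
  rw [intervalIntegrable_iff_integrableOn_Ioo_of_le hb] at hW ⊢
  refine Integrable.mono' hW (hf.aestronglyMeasurable measurableSet_Ioo) ?_
  exact (ae_restrict_iff' measurableSet_Ioo).2 (Eventually.of_forall h)

lemma hasDerivAt_primitive {f : ℝ → ℝ} {b r : ℝ} (hf : ContinuousOn f (Ioo 0 b))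
    (hi : IntervalIntegrable f volume 0 b) (hr : r ∈ Ioo 0 b) :
    HasDerivAt (fun x => ∫ t in (0 : ℝ)..x, f t) (f r) r := by
  have hsub : IntervalIntegrable f volume 0 r :=
    hi.mono_set (by
      rw [uIcc_of_le hr.1.le, uIcc_of_le (hr.1.trans hr.2).le]
      exact Icc_subset_Icc_right hr.2.le)
  exact integral_hasDerivAt_right hsub
    (hf.stronglyMeasurableAtFilter isOpen_Ioo r hr) (hf.continuousAt (isOpen_Ioo.mem_nhds hr))

lemma intervalIntegrable_pow_succ_mul {g : ℝ → ℝ} {b : ℝ} (k : ℕ)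
    (hi : IntervalIntegrable (fun t => t * g t) volume 0 b) :
    IntervalIntegrable (fun t => t ^ (k + 1) * g t) volume 0 b := by
  have := hi.continuousOn_mul (f := fun t : ℝ => t * g t) (g := fun t : ℝ => t ^ k)
    (continuous_pow k).continuousOn
  refine this.congr (fun t _ => ?_)
  ring

lemma hasDerivAt_radialPot {k : ℕ} (hk : 1 ≤ k) {g : ℝ → ℝ} {b r : ℝ}
    (hg : ContinuousOn g (Ioo 0 b)) (hi : IntervalIntegrable (fun t => t * g t) volume 0 b)
    (hr : r ∈ Ioo 0 b) :
    HasDerivAt (radialPot k g)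
      ((r ^ (k + 1))⁻¹ * ∫ t in (0 : ℝ)..r, t ^ (k + 1) * g t) r := by
  have h1 := hasDerivAt_primitive (continuousOn_id.mul hg) hi hr
  have h2 := hasDerivAt_primitive (((continuous_pow (k + 1)).continuousOn).mul hg)
    (intervalIntegrable_pow_succ_mul k hi) hr
  have hr0 : r ≠ 0 := hr.1.ne'
  have hk0 : (k : ℝ) ≠ 0 := by positivity
  have h3 := (hasDerivAt_pow k r).inv (pow_ne_zero k hr0)
  have h4 := (h1.sub (h3.mul h2)).div_const (k : ℝ)
  refine h4.congr_deriv ?_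
  obtain ⟨j, rfl⟩ : ∃ j, k = j + 1 := ⟨k - 1, by omega⟩
  simp only [Pi.inv_apply, id, Nat.add_sub_cancel, Pi.mul_apply]
  push_cast at hk0 ⊢
  field_simp
  ring

lemma hasDerivAt_radialPot_deriv {k : ℕ} {g : ℝ → ℝ} {b r : ℝ}
    (hg : ContinuousOn g (Ioo 0 b)) (hi : IntervalIntegrable (fun t => t * g t) volume 0 b)
    (hr : r ∈ Ioo 0 b) :
    HasDerivAt (fun r => (r ^ (k + 1))⁻¹ * ∫ t in (0 : ℝ)..r, t ^ (k + 1) * g t)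
      (g r - (k + 1) / r * ((r ^ (k + 1))⁻¹ * ∫ t in (0 : ℝ)..r, t ^ (k + 1) * g t)) r := by
  have h2 := hasDerivAt_primitive (((continuous_pow (k + 1)).continuousOn).mul hg)
    (intervalIntegrable_pow_succ_mul k hi) hr
  have hr0 : r ≠ 0 := hr.1.ne'
  have h3 := (hasDerivAt_pow (k + 1) r).inv (pow_ne_zero (k + 1) hr0)
  refine (h3.mul h2).congr_deriv ?_
  simp only [Pi.inv_apply, Nat.add_sub_cancel, Pi.mul_apply]
  push_cast
  field_simp
  ring

/-- The kernel `(t - t ^ (k + 1) / r ^ k) / k` of `radialPot` is at most `2 * t` in absolute value;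
hence a majorant `W` of `|t * g t|` controls the potential. -/
lemma abs_radialPot_le {k : ℕ} (hk : 1 ≤ k) {g W : ℝ → ℝ} {b r : ℝ}
    (hW : IntervalIntegrable W volume 0 b)
    (h : ∀ t ∈ Ioo 0 b, |t * g t| ≤ W t) (hr : r ∈ Ioo 0 b) :
    |radialPot k g r| ≤ 2 * ∫ t in (0 : ℝ)..r, W t := by
  have hsub : IntervalIntegrable W volume 0 r :=
    hW.mono_set (by
      rw [uIcc_of_le hr.1.le, uIcc_of_le (hr.1.trans hr.2).le]
      exact Icc_subset_Icc_right hr.2.le)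
  have hmem : ∀ t ∈ Ioc 0 r, t ∈ Ioo 0 b := fun t ht => ⟨ht.1, ht.2.trans_lt hr.2⟩
  have h1 : |∫ t in (0 : ℝ)..r, t * g t| ≤ ∫ t in (0 : ℝ)..r, W t := by
    rw [← Real.norm_eq_abs]
    refine norm_integral_le_of_norm_le hr.1.le (Eventually.of_forall fun t ht => ?_) hsub
    exact h t (hmem t ht)
  have h2 : |∫ t in (0 : ℝ)..r, t ^ (k + 1) * g t| ≤ ∫ t in (0 : ℝ)..r, r ^ k * W t := by
    rw [← Real.norm_eq_abs]
    refine norm_integral_le_of_norm_le hr.1.le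
      (Eventually.of_forall fun t ht => ?_) (hsub.const_mul _)
    have e : t ^ (k + 1) * g t = t ^ k * (t * g t) := by ring
    rw [Real.norm_eq_abs, e, abs_mul, abs_of_nonneg (pow_nonneg ht.1.le k)]
    exact mul_le_mul (pow_le_pow_left₀ ht.1.le ht.2 k) (h t (hmem t ht)) (abs_nonneg _)
      (pow_nonneg hr.1.le k)
  rw [intervalIntegral.integral_const_mul] at h2
  have hrk : 0 < r ^ k := pow_pos hr.1 k
  have h3 : |(r ^ k)⁻¹ * ∫ t in (0 : ℝ)..r, t ^ (k + 1) * g t| ≤ ∫ t in (0 : ℝ)..r, W t := by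
    rw [abs_mul, abs_of_pos (inv_pos.2 hrk), inv_mul_le_iff₀ hrk]
    exact h2
  have hk1 : (1 : ℝ) ≤ k := by exact_mod_cast hk
  rw [radialPot, abs_div, Nat.abs_cast]
  refine (div_le_self (abs_nonneg _) hk1).trans ?_
  refine (abs_sub _ _).trans ?_
  linarith

/-! ### Uniqueness for the linear problems -/

/-- A radial harmonic function on a punctured ball that vanishes at the origin is zero. The
hypothesis at `0` is only that `z → 0`: the singular solution `r ^ (-k)` is excluded because both
`r ^ (k + 1) * z'` and `r * z' + k * z` are first integrals. -/
lemma eq_zero_of_radial_harmonic {k : ℕ} (hk : 1 ≤ k) {z z' : ℝ → ℝ} {b : ℝ}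
    (h1 : ∀ r ∈ Ioo 0 b, HasDerivAt z (z' r) r)
    (h2 : ∀ r ∈ Ioo 0 b, HasDerivAt z' (-((k + 1) / r * z' r)) r)
    (h0 : Tendsto z (𝓝[>] 0) (𝓝 0)) : ∀ r ∈ Ioo 0 b, z r = 0 := by
  intro r hr
  have hb : 0 < b := hr.1.trans hr.2
  have hA : ∀ x ∈ Ioo 0 b, HasDerivAt (fun x => x ^ (k + 1) * z' x) 0 x := by
    intro x hx
    refine ((hasDerivAt_pow (k + 1) x).mul (h2 x hx)).congr_deriv ?_
    have := hx.1.ne'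
    simp only [Nat.add_sub_cancel]
    push_cast
    field_simp
    ring
  have hB : ∀ x ∈ Ioo 0 b, HasDerivAt (fun x => x * z' x + k * z x) 0 x := by
    intro x hx
    refine (((hasDerivAt_id x).mul (h2 x hx)).add ((h1 x hx).const_mul (k : ℝ))).congr_deriv ?_
    have := hx.1.ne'
    simp only [id]
    field_simp
    ring
  have key : ∀ F : ℝ → ℝ, (∀ x ∈ Ioo 0 b, HasDerivAt F 0 x) → ∃ a, ∀ x ∈ Ioo 0 b, F x = a :=
    fun F hF => isOpen_Ioo.exists_is_const_of_deriv_eq_zero isPreconnected_Ioo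
      (fun x hx => (hF x hx).differentiableAt.differentiableWithinAt) (fun x hx => (hF x hx).deriv)
  obtain ⟨c, hc⟩ := key _ hA
  obtain ⟨d, hd⟩ := key _ hB
  have hev : ∀ᶠ x in 𝓝[>] (0 : ℝ), x ∈ Ioo 0 b := Ioo_mem_nhdsGT hb
  have hc0 : c = 0 := by
    have hpow : Tendsto (fun x : ℝ => x ^ k) (𝓝[>] 0) (𝓝 0) := by
      have := (continuous_pow (M := ℝ) k).tendsto 0
      rw [zero_pow (by omega)] at this
      exact this.mono_left nhdsWithin_le_nhds
    have hlim : Tendsto (fun x : ℝ => x ^ k * (d - k * z x)) (𝓝[>] 0) (𝓝 (0 * (d - k * 0))) :=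
      hpow.mul (tendsto_const_nhds.sub (h0.const_mul _))
    rw [zero_mul] at hlim
    refine tendsto_nhds_unique (tendsto_const_nhds.congr' ?_) hlim
    filter_upwards [hev] with x hx
    rw [← hc x hx, ← hd x hx]
    ring
  have hz' : ∀ x ∈ Ioo 0 b, d = k * z x := by
    intro x hx
    have e := hc x hx
    rw [hc0] at e
    have : z' x = 0 := (mul_eq_zero.1 e).resolve_left (pow_ne_zero _ hx.1.ne')
    rw [← hd x hx, this, mul_zero, zero_add]
  have hd0 : d = 0 := by
    have hlim := h0.const_mul (k : ℝ)
    rw [mul_zero] at hlim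
    refine tendsto_nhds_unique (tendsto_const_nhds.congr' ?_) hlim
    filter_upwards [hev] with x hx using hz' x hx
  have hk0 : (k : ℝ) ≠ 0 := by positivity
  have := hz' r hr
  rw [hd0] at this
  exact (mul_eq_zero.1 this.symm).resolve_left hk0

/-- Gronwall's inequality with the weight `t ^ (1 - s)`, which is integrable at `0` because
`s < 2`. -/
lemma singular_gronwall {s K b C : ℝ} (hs2 : s < 2) {w : ℝ → ℝ}
    (hw : ContinuousOn w (Ioo 0 b)) (hC : ∀ r ∈ Ioo 0 b, |w r| ≤ C)
    (h : ∀ r ∈ Ioo 0 b, |w r| ≤ K * ∫ t in (0 : ℝ)..r, t ^ (1 - s) * |w t|) :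
    ∀ r ∈ Ioo 0 b, w r = 0 := by
  intro r hr
  have hb : 0 < b := hr.1.trans hr.2
  have hcont : ContinuousOn (fun t : ℝ => t ^ (1 - s) * |w t|) (Ioo 0 b) :=
    (continuousOn_id.rpow_const fun t ht => Or.inl ht.1.ne').mul hw.abs
  have hint : IntervalIntegrable (fun t : ℝ => t ^ (1 - s) * |w t|) volume 0 b := by
    refine intervalIntegrable_of_continuousOn_Ioo hb.le hcont
      ((intervalIntegrable_rpow' (by linarith : -1 < 1 - s)).mul_const C) fun t ht => ?_
    have h0 : 0 ≤ t ^ (1 - s) := rpow_nonneg ht.1.le _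
    rw [abs_mul, abs_of_nonneg h0, abs_abs]
    exact mul_le_mul_of_nonneg_left (hC t ht) h0
  set φ : ℝ → ℝ := fun x => ∫ t in (0 : ℝ)..x, t ^ (1 - s) * |w t| with hφ
  -- The integrating factor for `φ' ≤ K * x ^ (1 - s) * φ`.
  set e : ℝ → ℝ := fun x => Real.exp (-(K * (x ^ (2 - s) / (2 - s)))) with he
  have h2s : 0 < 2 - s := by linarith
  have hderiv : ∀ x ∈ Ioo 0 b, HasDerivAt (fun x => φ x * e x)
      (x ^ (1 - s) * (|w x| - K * φ x) * e x) x := by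
    intro x hx
    have d1 : HasDerivAt φ (x ^ (1 - s) * |w x|) x := hasDerivAt_primitive hcont hint hx
    have d2 := ((((Real.hasDerivAt_rpow_const (p := 2 - s) (Or.inl hx.1.ne')).div_const
      (2 - s)).const_mul K).neg).exp
    refine (d1.mul d2).congr_deriv ?_
    have : (2 : ℝ) - s - 1 = 1 - s := by ring
    rw [this]
    simp only [he, Pi.neg_apply]
    field_simp
    ring
  have hcφ : ContinuousOn φ (Icc 0 b) := by
    have := continuousOn_primitive_interval' hint left_mem_uIcc
    rwa [uIcc_of_le hb.le] at this
  have hce : Continuous e := by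
    have : Continuous fun x : ℝ => x ^ (2 - s) := Real.continuous_rpow_const h2s.le
    simp only [he]
    fun_prop
  have hanti : AntitoneOn (fun x => φ x * e x) (Ico 0 b) := by
    refine antitoneOn_of_deriv_nonpos (convex_Ico 0 b)
      ((hcφ.mono Ico_subset_Icc_self).mul hce.continuousOn) ?_ ?_ <;> rw [interior_Ico]
    · exact fun x hx => (hderiv x hx).differentiableAt.differentiableWithinAt
    · intro x hx
      rw [(hderiv x hx).deriv]
      refine mul_nonpos_of_nonpos_of_nonneg (mul_nonpos_of_nonneg_of_nonpos
        (rpow_nonneg hx.1.le _) ?_) (Real.exp_pos _).le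
      have := h x hx
      simp only [hφ]
      linarith
  have hle := hanti ⟨le_rfl, hb⟩ ⟨hr.1.le, hr.2⟩ hr.1.le
  have hφ0 : φ 0 = 0 := by simp [hφ]
  simp only [hφ0, zero_mul] at hle
  have hφr : φ r ≤ 0 := nonpos_of_mul_nonpos_left hle (Real.exp_pos _)
  have hφr' : 0 ≤ φ r := intervalIntegral.integral_nonneg hr.1.le fun t ht =>
    mul_nonneg (rpow_nonneg ht.1 _) (abs_nonneg _)
  have := h r hr
  have e0 : (∫ t in (0 : ℝ)..r, t ^ (1 - s) * |w t|) = 0 := le_antisymm hφr hφr'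
  rw [e0, mul_zero] at this
  exact abs_nonpos_iff.1 this

/-! ### Boundary behaviour of the radial potential -/

lemma radialPot_zero (k : ℕ) (g : ℝ → ℝ) : radialPot k g 0 = 0 := by
  simp [radialPot]

lemma radialPot_sub {k : ℕ} {g₁ g₂ : ℝ → ℝ} {b r : ℝ}
    (h₁ : IntervalIntegrable (fun t => t * g₁ t) volume 0 b)
    (h₂ : IntervalIntegrable (fun t => t * g₂ t) volume 0 b) (hr : r ∈ Icc 0 b) :
    radialPot k (fun t => g₁ t - g₂ t) r = radialPot k g₁ r - radialPot k g₂ r := by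
  have hsub : uIcc 0 r ⊆ uIcc 0 b := by
    rw [uIcc_of_le hr.1, uIcc_of_le (hr.1.trans hr.2)]
    exact Icc_subset_Icc_right hr.2
  simp only [radialPot, mul_sub]
  rw [integral_sub (h₁.mono_set hsub) (h₂.mono_set hsub),
    integral_sub ((intervalIntegrable_pow_succ_mul k h₁).mono_set hsub)
      ((intervalIntegrable_pow_succ_mul k h₂).mono_set hsub)]
  ring

lemma tendsto_radialPot {k : ℕ} (hk : 1 ≤ k) {g W : ℝ → ℝ} {b : ℝ} (hb : 0 < b)
    (hW : IntervalIntegrable W volume 0 b) (h : ∀ t ∈ Ioo 0 b, |t * g t| ≤ W t) :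
    Tendsto (radialPot k g) (𝓝[>] 0) (𝓝 0) := by
  have hc := continuousOn_primitive_interval' hW left_mem_uIcc
  rw [uIcc_of_le hb.le] at hc
  have h0 := (hc 0 ⟨le_rfl, hb.le⟩).tendsto
  simp only [integral_same] at h0
  have h1 : Tendsto (fun r => 2 * ∫ t in (0 : ℝ)..r, W t) (𝓝[>] 0) (𝓝 0) := by
    have := h0.const_mul 2
    rw [mul_zero] at this
    refine this.mono_left ?_
    rw [← nhdsWithin_Ioc_eq_nhdsGT hb]
    exact nhdsWithin_mono _ Ioc_subset_Icc_self
  refine squeeze_zero_norm' ?_ h1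
  filter_upwards [Ioo_mem_nhdsGT hb] with r hr using abs_radialPot_le hk hW h hr

lemma continuousOn_radialPot {k : ℕ} (hk : 1 ≤ k) {g W : ℝ → ℝ} {b : ℝ}
    (hg : ContinuousOn g (Ioo 0 b)) (hW : IntervalIntegrable W volume 0 b)
    (h : ∀ t ∈ Ioo 0 b, |t * g t| ≤ W t) : ContinuousOn (radialPot k g) (Ico 0 b) := by
  intro r hr
  have hb : 0 < b := hr.1.trans_lt hr.2
  rcases hr.1.eq_or_lt with rfl | hr0
  · have h2 : ContinuousWithinAt (radialPot k g) (Ioi 0) 0 := by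
      rw [ContinuousWithinAt, radialPot_zero]
      exact tendsto_radialPot hk hb hW h
    exact (continuousWithinAt_Ioi_iff_Ici.1 h2).mono Ico_subset_Ici_self
  · exact (hasDerivAt_radialPot hk hg (intervalIntegrable_of_continuousOn_Ioo hb.le
      (continuousOn_id.mul hg) hW h) ⟨hr0, hr.2⟩).continuousAt.continuousWithinAt

lemma intervalIntegrable_weight {s : ℝ} (hs2 : s < 2) (D b : ℝ) :
    IntervalIntegrable (fun t : ℝ => D * t ^ (1 - s)) volume 0 b :=
  (intervalIntegrable_rpow' (by linarith : -1 < 1 - s)).const_mul D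

lemma abs_mul_le_weight {s D t y : ℝ} (ht : 0 < t) (h : |y| ≤ D * t ^ (-s)) :
    |t * y| ≤ D * t ^ (1 - s) := by
  rw [abs_mul, abs_of_pos ht, sub_eq_add_neg, rpow_add ht, rpow_one]
  nlinarith

lemma abs_radialPot_le_rpow {k : ℕ} (hk : 1 ≤ k) {s D b r : ℝ} (hs2 : s < 2) {g : ℝ → ℝ}
    (h : ∀ t ∈ Ioo 0 b, |g t| ≤ D * t ^ (-s)) (hr : r ∈ Ico 0 b) :
    |radialPot k g r| ≤ 2 * (D * (r ^ (2 - s) / (2 - s))) := by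
  rcases hr.1.eq_or_lt with rfl | hr0
  · rw [radialPot_zero, zero_rpow (by linarith)]; simp
  · refine (abs_radialPot_le hk (intervalIntegrable_weight hs2 D b)
      (fun t ht => abs_mul_le_weight ht.1 (h t ht)) ⟨hr0, hr.2⟩).trans_eq ?_
    rw [intervalIntegral.integral_const_mul, integral_rpow (Or.inl (by linarith)),
      show 1 - s + 1 = 2 - s by ring, zero_rpow (by linarith), sub_zero]

/-! ### The nonlinearity -/

/-- The right-hand side of the equation in the form `u'' + ((n - 1) / r) u' = nonlin s μ q p r u`,
with a general exponent `p` in place of `2*(s) - 1`. -/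
def nonlin (s μ q p t x : ℝ) : ℝ := μ * x ^ q - t ^ (-s) * x ^ p

lemma rpow_lipschitz_on_Icc {a : ℝ} (ha : 0 < a) (c e : ℝ) :
    ∃ L : ℝ, 0 ≤ L ∧ ∀ x ∈ Icc a c, ∀ y ∈ Icc a c, |x ^ e - y ^ e| ≤ L * |x - y| := by
  have hcd : ContDiffOn ℝ 1 (fun x : ℝ => x ^ e) (Icc a c) := fun x hx =>
    (Real.contDiffAt_rpow_const_of_ne (ha.trans_le hx.1).ne').contDiffWithinAt
  obtain ⟨K, hK⟩ := hcd.exists_lipschitzOnWith one_ne_zero (convex_Icc a c) isCompact_Icc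
  exact ⟨K, K.2, fun x hx y hy => hK.dist_le_mul x hx y hy⟩

/-- On `[a, c] ⊆ (0, ∞)` the nonlinearity is bounded and Lipschitz in `x` with constants of order
`t ^ (-s)`. Away from `x = 0` no lower bound on the exponents is needed. -/
lemma nonlin_estimates {s μ : ℝ} (q p : ℝ) (hs0 : 0 < s) (hμ : 0 < μ) {a : ℝ} (ha : 0 < a)
    (c b : ℝ) : ∃ L : ℝ, 0 ≤ L ∧ ∀ t ∈ Ioo 0 b, ∀ x ∈ Icc a c,
      |nonlin s μ q p t x| ≤ L * t ^ (-s) ∧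
      ∀ y ∈ Icc a c, |nonlin s μ q p t x - nonlin s μ q p t y| ≤ L * t ^ (-s) * |x - y| := by
  obtain ⟨Lq, hLq, h1⟩ := rpow_lipschitz_on_Icc ha c q
  obtain ⟨Lp, hLp, h2⟩ := rpow_lipschitz_on_Icc ha c p
  have hcont : ∀ e : ℝ, ContinuousOn (fun x : ℝ => x ^ e) (Icc a c) := fun e =>
    continuousOn_id.rpow_const fun x hx => Or.inl (ha.trans_le hx.1).ne'
  obtain ⟨Bq, h3⟩ := isCompact_Icc.exists_bound_of_continuousOn (hcont q)
  obtain ⟨Bp, h4⟩ := isCompact_Icc.exists_bound_of_continuousOn (hcont p)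
  simp only [Real.norm_eq_abs] at h3 h4
  have key : ∀ t ∈ Ioo 0 b, ∀ A C X Y : ℝ, |X| ≤ A → |Y| ≤ C →
      |μ * X - t ^ (-s) * Y| ≤ (μ * b ^ s * A + C) * t ^ (-s) := by
    intro t ht A C X Y hX hY
    have hts : 0 < t ^ (-s) := rpow_pos_of_pos ht.1 _
    -- Absorbs the nonsingular term `μ * x ^ q` into the weight `t ^ (-s)`.
    have hbt : 1 ≤ b ^ s * t ^ (-s) := by
      rw [rpow_neg ht.1.le, ← div_eq_mul_inv, one_le_div (rpow_pos_of_pos ht.1 _)]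
      exact rpow_le_rpow ht.1.le ht.2.le hs0.le
    have hA : 0 ≤ A := (abs_nonneg _).trans hX
    calc |μ * X - t ^ (-s) * Y| ≤ |μ * X| + |t ^ (-s) * Y| := abs_sub _ _
      _ = μ * |X| + t ^ (-s) * |Y| := by rw [abs_mul, abs_mul, abs_of_pos hμ, abs_of_pos hts]
      _ ≤ μ * A + t ^ (-s) * C := by gcongr
      _ ≤ μ * A * (b ^ s * t ^ (-s)) + t ^ (-s) * C := by
          have := le_mul_of_one_le_right (mul_nonneg hμ.le hA) hbt
          linarith
      _ = _ := by ring
  refine ⟨|μ * b ^ s * Lq + Lp| + |μ * b ^ s * Bq + Bp|, by positivity, fun t ht x hx => ⟨?_, ?_⟩⟩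
  · refine (key t ht _ _ _ _ (h3 x hx) (h4 x hx)).trans ?_
    have hts : 0 < t ^ (-s) := rpow_pos_of_pos ht.1 _
    refine mul_le_mul_of_nonneg_right ?_ hts.le
    linarith [le_abs_self (μ * b ^ s * Bq + Bp), abs_nonneg (μ * b ^ s * Lq + Lp)]
  · intro y hy
    have e : nonlin s μ q p t x - nonlin s μ q p t y
        = μ * (x ^ q - y ^ q) - t ^ (-s) * (x ^ p - y ^ p) := by
      simp only [nonlin]; ring
    rw [e]
    refine (key t ht _ _ _ _ (h1 x hx y hy) (h2 x hx y hy)).trans ?_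
    have hts : 0 < t ^ (-s) := rpow_pos_of_pos ht.1 _
    calc _ = (μ * b ^ s * Lq + Lp) * t ^ (-s) * |x - y| := by ring
      _ ≤ _ := by
        refine mul_le_mul_of_nonneg_right (mul_le_mul_of_nonneg_right ?_ hts.le) (abs_nonneg _)
        linarith [le_abs_self (μ * b ^ s * Lq + Lp), abs_nonneg (μ * b ^ s * Bq + Bp)]

lemma continuousOn_nonlin (s μ q p : ℝ) {u : ℝ → ℝ} {b : ℝ} (hu : ContinuousOn u (Ioo 0 b))
    (hpos : ∀ t ∈ Ioo 0 b, 0 < u t) :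
    ContinuousOn (fun t => nonlin s μ q p t (u t)) (Ioo 0 b) := by
  have hr : ∀ e : ℝ, ContinuousOn (fun t => u t ^ e) (Ioo 0 b) := fun e =>
    hu.rpow_const fun t ht => Or.inl (hpos t ht).ne'
  exact (continuousOn_const.mul (hr q)).sub
    ((continuousOn_id.rpow_const fun t ht => Or.inl ht.1.ne').mul (hr p))

/-! ### Uniqueness -/

/-- At interior points the `deriv`s in `radialEq` are genuine derivatives. -/
lemma IsRadialSol.hasDerivAt {k : ℕ} {s μ q R : ℝ} {u : ℝ → ℝ}
    (hu : IsRadialSol (k + 2) s μ q (Ioc 0 R) u) {r : ℝ} (hr : r ∈ Ioo 0 R) :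
    HasDerivAt u (deriv u r) r ∧
      HasDerivAt (deriv u)
        (nonlin s μ q (twoStarS (k + 2) s - 1) r (u r) - (k + 1) / r * deriv u r) r := by
  have hcd : ContDiffOn ℝ (1 + 1) u (Ioo 0 R) := by
    rw [one_add_one_eq_two]; exact hu.1.mono Ioo_subset_Ioc_self
  obtain ⟨h1, -, h2⟩ := (contDiffOn_succ_iff_deriv_of_isOpen isOpen_Ioo).1 hcd
  have hn := isOpen_Ioo.mem_nhds hr
  refine ⟨((h1 r hr).differentiableAt hn).hasDerivAt, ?_⟩
  refine (((h2.differentiableOn one_ne_zero) r hr).differentiableAt hn).hasDerivAt.congr_deriv ?_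
  have he := hu.2.2 r (Ioo_subset_Ioc_self hr)
  simp only [radialEq, nonlin] at he ⊢
  push_cast at he
  have : (k : ℝ) + 2 - 1 = k + 1 := by ring
  rw [this] at he
  linarith

/-- A positive continuous function on `(0, b]` with a positive limit at `0` takes its values in a
compact subinterval of `(0, ∞)`. -/
lemma exists_range_bounds {u : ℝ → ℝ} {b γ : ℝ} (hb : 0 < b) (hγ : 0 < γ)
    (hu : ContinuousOn u (Ioc 0 b)) (hpos : ∀ t ∈ Ioc 0 b, 0 < u t)
    (h0 : Tendsto u (𝓝[>] 0) (𝓝 γ)) :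
    ∃ a c : ℝ, 0 < a ∧ ∀ t ∈ Ioc 0 b, u t ∈ Icc a c := by
  have hc : ContinuousOn (Function.update u 0 γ) (Icc 0 b) := by
    rw [continuousOn_update_iff, Icc_sdiff_left]
    refine ⟨hu, fun _ => h0.mono_left (nhdsWithin_mono _ fun t ht => ht.1)⟩
  have hne : (Icc 0 b).Nonempty := ⟨0, le_rfl, hb.le⟩
  obtain ⟨x, hx, hmin⟩ := isCompact_Icc.exists_isMinOn hne hc
  obtain ⟨y, hy, hmax⟩ := isCompact_Icc.exists_isMaxOn hne hc
  refine ⟨Function.update u 0 γ x, Function.update u 0 γ y, ?_, fun t ht => ⟨?_, ?_⟩⟩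
  · rcases hx.1.eq_or_lt with rfl | hx0
    · simpa using hγ
    · rw [Function.update_of_ne hx0.ne']
      exact hpos x ⟨hx0, hx.2⟩
  · have := hmin (Ioc_subset_Icc_self ht)
    simpa [Function.update_of_ne ht.1.ne'] using this
  · have := hmax (Ioc_subset_Icc_self ht)
    simpa [Function.update_of_ne ht.1.ne'] using this

/-- Uniqueness on the open interval. The endpoint is left out because the two-sided `deriv` there
depends on values outside the interval. -/
lemma eq_of_isRadialSol {k : ℕ} (hk : 1 ≤ k) {s μ q γ R₁ R₂ : ℝ} (hs0 : 0 < s) (hs2 : s < 2)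
    (hμ : 0 < μ) (hγ : 0 < γ) {u₁ u₂ : ℝ → ℝ}
    (hu₁ : IsRadialSol (k + 2) s μ q (Ioc 0 R₁) u₁)
    (hu₂ : IsRadialSol (k + 2) s μ q (Ioc 0 R₂) u₂)
    (h₁ : Tendsto u₁ (𝓝[>] 0) (𝓝 γ)) (h₂ : Tendsto u₂ (𝓝[>] 0) (𝓝 γ)) :
    EqOn u₁ u₂ (Ioo 0 (min R₁ R₂)) := by
  intro r hr
  obtain ⟨b, hrb, hbR⟩ := exists_between hr.2
  have hb : 0 < b := hr.1.trans hrb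
  have hb₁ : b < R₁ := hbR.trans_le (min_le_left _ _)
  have hb₂ : b < R₂ := hbR.trans_le (min_le_right _ _)
  have hs₁ : Ioc 0 b ⊆ Ioc 0 R₁ := Ioc_subset_Ioc_right hb₁.le
  have hs₂ : Ioc 0 b ⊆ Ioc 0 R₂ := Ioc_subset_Ioc_right hb₂.le
  obtain ⟨a₁, c₁, ha₁, hr₁⟩ := exists_range_bounds hb hγ (hu₁.1.continuousOn.mono hs₁)
    (fun t ht => hu₁.2.1 t (hs₁ ht)) h₁
  obtain ⟨a₂, c₂, ha₂, hr₂⟩ := exists_range_bounds hb hγ (hu₂.1.continuousOn.mono hs₂)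
    (fun t ht => hu₂.2.1 t (hs₂ ht)) h₂
  set a := min a₁ a₂
  set c := max c₁ c₂
  set p := twoStarS (k + 2) s - 1
  have hm₁ : ∀ t ∈ Ioo 0 b, u₁ t ∈ Icc a c := fun t ht =>
    Icc_subset_Icc (min_le_left _ _) (le_max_left _ _) (hr₁ t (Ioo_subset_Ioc_self ht))
  have hm₂ : ∀ t ∈ Ioo 0 b, u₂ t ∈ Icc a c := fun t ht =>
    Icc_subset_Icc (min_le_right _ _) (le_max_right _ _) (hr₂ t (Ioo_subset_Ioc_self ht))
  obtain ⟨L, hL, hest⟩ := nonlin_estimates q p hs0 hμ (lt_min ha₁ ha₂ : 0 < a) c b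
  have hc₁ : ContinuousOn u₁ (Ioo 0 b) :=
    hu₁.1.continuousOn.mono (Ioo_subset_Ioc_self.trans hs₁)
  have hc₂ : ContinuousOn u₂ (Ioo 0 b) :=
    hu₂.1.continuousOn.mono (Ioo_subset_Ioc_self.trans hs₂)
  set g : ℝ → ℝ := fun t => nonlin s μ q p t (u₁ t) - nonlin s μ q p t (u₂ t)
  have hg : ContinuousOn g (Ioo 0 b) :=
    (continuousOn_nonlin s μ q p hc₁ fun t ht => hu₁.2.1 t (hs₁ (Ioo_subset_Ioc_self ht))).sub
      (continuousOn_nonlin s μ q p hc₂ fun t ht => hu₂.2.1 t (hs₂ (Ioo_subset_Ioc_self ht)))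
  have hwc : ∀ t ∈ Ioo 0 b, |u₁ t - u₂ t| ≤ c - a := fun t ht =>
    abs_sub_le_iff.2 ⟨by linarith [(hm₁ t ht).2, (hm₂ t ht).1],
      by linarith [(hm₂ t ht).2, (hm₁ t ht).1]⟩
  have hgW : ∀ t ∈ Ioo 0 b, |t * g t| ≤ L * (t ^ (1 - s) * |u₁ t - u₂ t|) := by
    intro t ht
    have := abs_mul_le_weight (D := L * |u₁ t - u₂ t|) (s := s) (y := g t) ht.1
      (((hest t ht _ (hm₁ t ht)).2 _ (hm₂ t ht)).trans_eq (by ring))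
    exact this.trans_eq (by ring)
  have hW : IntervalIntegrable (fun t => L * (t ^ (1 - s) * |u₁ t - u₂ t|)) volume 0 b := by
    refine (intervalIntegrable_of_continuousOn_Ioo hb.le (W := fun t => (c - a) * t ^ (1 - s))
      ((continuousOn_id.rpow_const fun t ht => Or.inl ht.1.ne').mul (hc₁.sub hc₂).abs)
      (intervalIntegrable_weight hs2 _ b) fun t ht => ?_).const_mul L
    have h0 : 0 ≤ t ^ (1 - s) := rpow_nonneg ht.1.le _
    change |t ^ (1 - s) * (|u₁ t - u₂ t|)| ≤ _
    rw [abs_mul, abs_of_nonneg h0, abs_abs, mul_comm]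
    exact mul_le_mul_of_nonneg_right (hwc t ht) h0
  have hi := intervalIntegrable_of_continuousOn_Ioo hb.le (continuousOn_id.mul hg) hW hgW
  -- The difference of the solutions is the radial potential of the difference of the sources.
  have hz : ∀ t ∈ Ioo 0 b, (u₁ t - u₂ t) - radialPot k g t = 0 := by
    refine eq_zero_of_radial_harmonic hk
      (z' := fun t => (deriv u₁ t - deriv u₂ t)
        - (t ^ (k + 1))⁻¹ * ∫ x in (0 : ℝ)..t, x ^ (k + 1) * g x) ?_ ?_ ?_
    · intro t ht
      exact ((hu₁.hasDerivAt ⟨ht.1, ht.2.trans hb₁⟩).1.sub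
        (hu₂.hasDerivAt ⟨ht.1, ht.2.trans hb₂⟩).1).sub (hasDerivAt_radialPot hk hg hi ht)
    · intro t ht
      refine (((hu₁.hasDerivAt ⟨ht.1, ht.2.trans hb₁⟩).2.sub
        (hu₂.hasDerivAt ⟨ht.1, ht.2.trans hb₂⟩).2).sub
          (hasDerivAt_radialPot_deriv hg hi ht)).congr_deriv ?_
      simp only [g, p]
      ring
    · have := (h₁.sub h₂).sub (tendsto_radialPot hk hb hW hgW)
      simpa using this
  have := singular_gronwall (K := 2 * L) hs2 (hc₁.sub hc₂) hwc (fun t ht => ?_) r ⟨hr.1, hrb⟩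
  · exact sub_eq_zero.1 this
  · have e := abs_radialPot_le hk hW hgW ht
    rw [← sub_eq_zero.1 (hz t ht), intervalIntegral.integral_const_mul] at e
    exact e.trans_eq (by simp only [Pi.sub_apply]; ring)

/-! ### Existence -/

lemma contDiffOn_two_of_hasDerivAt {u u' u'' : ℝ → ℝ} {S : Set ℝ} (hS : IsOpen S)
    (h1 : ∀ r ∈ S, HasDerivAt u (u' r) r) (h2 : ∀ r ∈ S, HasDerivAt u' (u'' r) r)
    (h3 : ContinuousOn u'' S) :
    ContDiffOn ℝ 2 u S ∧ ∀ r ∈ S, deriv u r = u' r ∧ deriv (deriv u) r = u'' r := by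
  have e1 : EqOn (deriv u) u' S := fun r hr => (h1 r hr).deriv
  have e2 : ∀ r ∈ S, deriv (deriv u) r = u'' r := fun r hr =>
    (e1.eventuallyEq_of_mem (hS.mem_nhds hr)).deriv_eq.trans (h2 r hr).deriv
  refine ⟨?_, fun r hr => ⟨e1 hr, e2 r hr⟩⟩
  have d2 : ContDiffOn ℝ (0 + 1) u' S := by
    rw [contDiffOn_succ_iff_deriv_of_isOpen hS]
    refine ⟨fun r hr => (h2 r hr).differentiableAt.differentiableWithinAt, by simp, ?_⟩
    exact contDiffOn_zero.2 (h3.congr fun r hr => (h2 r hr).deriv)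
  rw [zero_add] at d2
  rw [← one_add_one_eq_two, contDiffOn_succ_iff_deriv_of_isOpen hS]
  exact ⟨fun r hr => (h1 r hr).differentiableAt.differentiableWithinAt, by simp, d2.congr e1⟩

/-- Truncation to `[γ / 2, 2 * γ]`; it makes the nonlinearity globally bounded and Lipschitz in the
unknown, so that the fixed-point map is defined on all continuous functions. -/
def clamp (γ x : ℝ) : ℝ := max (γ / 2) (min x (2 * γ))

lemma clamp_mem {γ : ℝ} (hγ : 0 < γ) (x : ℝ) : clamp γ x ∈ Icc (γ / 2) (2 * γ) :=
  ⟨le_max_left _ _, max_le (by linarith) (min_le_right _ _)⟩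

lemma abs_clamp_sub_le (γ x y : ℝ) : |clamp γ x - clamp γ y| ≤ |x - y| := by
  refine (abs_max_sub_max_le_max _ _ _ _).trans ?_
  rw [sub_self, abs_zero]
  refine max_le (abs_nonneg _) ((abs_min_sub_min_le_max _ _ _ _).trans ?_)
  rw [sub_self, abs_zero]
  exact max_le le_rfl (abs_nonneg _)

lemma continuous_clamp (γ : ℝ) : Continuous (clamp γ) := by
  unfold clamp; fun_prop

lemma clamp_eq_self {γ x : ℝ} (hγ : 0 < γ) (h : |x - γ| ≤ γ / 2) : clamp γ x = x := by
  have := abs_le.1 h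
  rw [clamp, min_eq_left (by linarith), max_eq_right (by linarith)]

lemma exists_small_radius {s : ℝ} (hs2 : s < 2) (L : ℝ) {ε : ℝ} (hε : 0 < ε) :
    ∃ R : ℝ, 0 < R ∧ R < 1 ∧ ∀ r ∈ Icc 0 R, 2 * (L * (r ^ (2 - s) / (2 - s))) ≤ ε := by
  have hc : Continuous fun r : ℝ => 2 * (L * (r ^ (2 - s) / (2 - s))) := by
    have : Continuous fun x : ℝ => x ^ (2 - s) := Real.continuous_rpow_const (by linarith)
    fun_prop
  have h0 := hc.tendsto 0
  simp only [zero_rpow (by linarith : 2 - s ≠ 0), zero_div, mul_zero] at h0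
  obtain ⟨δ, hδ, hδ'⟩ := Metric.eventually_nhds_iff.1 (h0.eventually_le_const hε)
  refine ⟨min (δ / 2) (1 / 2), by positivity, by
    linarith [min_le_right (δ / 2) (1 / 2 : ℝ)], fun r hr => hδ' ?_⟩
  rw [Real.dist_eq, sub_zero, abs_of_nonneg hr.1]
  linarith [hr.2, min_le_left (δ / 2) (1 / 2 : ℝ)]

/-- Solution of the integral equation `u = γ + radialPot k (nonlin · u)` on a short interval
`[0, R]`, by Banach's fixed-point theorem. It is recorded through its source term `g`, which is
defined up to `1 > R` so that the solution is two-sidedly differentiable at `R`. -/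
lemma exists_integral_solution {k : ℕ} (hk : 1 ≤ k) {s μ γ : ℝ} (q p : ℝ) (hs0 : 0 < s)
    (hs2 : s < 2) (hμ : 0 < μ) (hγ : 0 < γ) :
    ∃ (R D : ℝ) (g : ℝ → ℝ), 0 < R ∧ R < 1 ∧ ContinuousOn g (Ioo 0 1) ∧
      (∀ t ∈ Ioo 0 1, |g t| ≤ D * t ^ (-s)) ∧
      ∀ r ∈ Icc 0 R, |radialPot k g r| ≤ γ / 2 ∧
        g r = nonlin s μ q p r (γ + radialPot k g r) := by
  obtain ⟨L, hL, hest⟩ := nonlin_estimates q p hs0 hμ (half_pos hγ) (2 * γ) 1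
  obtain ⟨R, hR0, hR1, hR⟩ := exists_small_radius hs2 L
    (lt_min (half_pos one_pos) (half_pos hγ) : 0 < min (1 / 2) (γ / 2))
  -- The truncated source term, with `v` extended by constants outside `[0, R]`.
  set G : C(Icc (0 : ℝ) R, ℝ) → ℝ → ℝ := fun v t =>
    nonlin s μ q p t (clamp γ (IccExtend hR0.le v t)) with hG
  have hGc : ∀ v, ContinuousOn (G v) (Ioo 0 1) := fun v =>
    continuousOn_nonlin s μ q p
      ((continuous_clamp γ).comp v.continuous.Icc_extend').continuousOn
      fun t _ => (half_pos hγ).trans_le (clamp_mem hγ _).1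
  have hGb : ∀ v, ∀ t ∈ Ioo 0 1, |G v t| ≤ L * t ^ (-s) := fun v t ht =>
    (hest t ht _ (clamp_mem hγ _)).1
  have hGw : ∀ v, ∀ t ∈ Ioo 0 1, |t * G v t| ≤ L * t ^ (1 - s) := fun v t ht =>
    abs_mul_le_weight ht.1 (hGb v t ht)
  have hGi : ∀ v, IntervalIntegrable (fun t => t * G v t) volume 0 1 := fun v =>
    intervalIntegrable_of_continuousOn_Ioo zero_le_one (continuousOn_id.mul (hGc v))
      (intervalIntegrable_weight hs2 L 1) (hGw v)
  have hsub : Icc 0 R ⊆ Ico 0 1 := fun t ht => ⟨ht.1, ht.2.trans_lt hR1⟩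
  have hTc : ∀ v, ContinuousOn (fun r => γ + radialPot k (G v) r) (Icc 0 R) := fun v =>
    continuousOn_const.add ((continuousOn_radialPot hk (hGc v)
      (intervalIntegrable_weight hs2 L 1) (hGw v)).mono hsub)
  let T : C(Icc (0 : ℝ) R, ℝ) → C(Icc (0 : ℝ) R, ℝ) := fun v =>
    ⟨fun x => γ + radialPot k (G v) x, (hTc v).domRestrict⟩
  have hT : ContractingWith (1 / 2) T := by
    refine ⟨by norm_num, LipschitzWith.of_dist_le_mul fun v₁ v₂ => ?_⟩
    refine (ContinuousMap.dist_le (by positivity)).2 fun x => ?_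
    change |γ + radialPot k (G v₁) x - (γ + radialPot k (G v₂) x)| ≤ _
    rw [add_sub_add_left_eq_sub, ← radialPot_sub (hGi v₁) (hGi v₂)
      ⟨x.2.1, x.2.2.trans hR1.le⟩]
    have hb := abs_radialPot_le_rpow hk hs2 (D := L * dist v₁ v₂) (b := 1)
      (g := fun t => G v₁ t - G v₂ t) (fun t ht => ?_) (hsub x.2)
    · refine hb.trans ?_
      have h2 := (hR x x.2).trans (min_le_left _ _)
      calc _ = 2 * (L * ((x : ℝ) ^ (2 - s) / (2 - s))) * dist v₁ v₂ := by ring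
        _ ≤ 1 / 2 * dist v₁ v₂ := mul_le_mul_of_nonneg_right h2 dist_nonneg
        _ = _ := by simp
    · refine ((hest t ht _ (clamp_mem hγ _)).2 _ (clamp_mem hγ _)).trans ?_
      have h3 : |clamp γ (IccExtend hR0.le v₁ t) - clamp γ (IccExtend hR0.le v₂ t)|
          ≤ dist v₁ v₂ :=
        (abs_clamp_sub_le _ _ _).trans (v₁.dist_apply_le_dist (g := v₂) (projIcc 0 R hR0.le t))
      have hts : 0 ≤ t ^ (-s) := rpow_nonneg ht.1.le _
      calc _ ≤ L * t ^ (-s) * dist v₁ v₂ := by gcongr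
        _ = _ := by ring
  obtain ⟨v, hv⟩ : ∃ v, T v = v := ⟨_, hT.fixedPoint_isFixedPt⟩
  refine ⟨R, L, G v, hR0, hR1, hGc v, hGb v, fun r hr => ?_⟩
  have hsmall : |radialPot k (G v) r| ≤ γ / 2 :=
    (abs_radialPot_le_rpow hk hs2 (hGb v) (hsub hr)).trans
      ((hR r hr).trans (min_le_right _ _))
  refine ⟨hsmall, ?_⟩
  have hvr : v ⟨r, hr⟩ = γ + radialPot k (G v) r := (DFunLike.congr_fun hv ⟨r, hr⟩).symm
  change nonlin s μ q p r (clamp γ (IccExtend hR0.le v r)) = _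
  rw [IccExtend_of_mem _ _ hr, hvr, clamp_eq_self hγ (by simpa using hsmall)]

lemma exists_isRadialSol {k : ℕ} (hk : 1 ≤ k) {s μ γ : ℝ} (q : ℝ) (hs0 : 0 < s)
    (hs2 : s < 2) (hμ : 0 < μ) (hγ : 0 < γ) :
    ∃ R : ℝ, 0 < R ∧ ∃ u : ℝ → ℝ, IsRadialSol (k + 2) s μ q (Ioc 0 R) u ∧
      Tendsto u (𝓝[>] 0) (𝓝 γ) := by
  obtain ⟨R, D, g, hR0, hR1, hgc, hgb, hfix⟩ :=
    exists_integral_solution hk q (twoStarS (k + 2) s - 1) hs0 hs2 hμ hγ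
  have hW := intervalIntegrable_weight hs2 D 1
  have hgw : ∀ t ∈ Ioo 0 1, |t * g t| ≤ D * t ^ (1 - s) := fun t ht =>
    abs_mul_le_weight ht.1 (hgb t ht)
  have hgi := intervalIntegrable_of_continuousOn_Ioo zero_le_one (continuousOn_id.mul hgc) hW hgw
  have h1 : ∀ r ∈ Ioo (0 : ℝ) 1, HasDerivAt (fun r => γ + radialPot k g r)
      ((r ^ (k + 1))⁻¹ * ∫ t in (0 : ℝ)..r, t ^ (k + 1) * g t) r := fun r hr =>
    (hasDerivAt_radialPot hk hgc hgi hr).const_add γ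
  have h2 := fun r hr => hasDerivAt_radialPot_deriv (k := k) hgc hgi (r := r) hr
  have h3 : ContinuousOn (fun r : ℝ => g r - (k + 1) / r *
      ((r ^ (k + 1))⁻¹ * ∫ t in (0 : ℝ)..r, t ^ (k + 1) * g t)) (Ioo 0 1) :=
    hgc.sub ((continuousOn_const.div continuousOn_id fun r hr => hr.1.ne').mul
      fun r hr => (h2 r hr).continuousAt.continuousWithinAt)
  obtain ⟨hcd, hder⟩ := contDiffOn_two_of_hasDerivAt isOpen_Ioo h1 h2 h3
  have hsub : Ioc 0 R ⊆ Ioo 0 1 := fun t ht => ⟨ht.1, ht.2.trans_lt hR1⟩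
  refine ⟨R, hR0, fun r => γ + radialPot k g r, ⟨hcd.mono hsub, fun r hr => ?_, fun r hr => ?_⟩, ?_⟩
  · linarith [(abs_le.1 (hfix r (Ioc_subset_Icc_self hr)).1).1]
  · obtain ⟨e1, e2⟩ := hder r (hsub hr)
    have e3 := (hfix r (Ioc_subset_Icc_self hr)).2
    simp only [radialEq]
    rw [e1, e2]
    nth_rewrite 1 [e3]
    simp only [nonlin]
    push_cast
    ring
  · simpa using (tendsto_radialPot hk one_pos hW hgw).const_add γ

theorem stmt0 (n : ℕ) (hn : 3 ≤ n) (s μ q : ℝ) (hs0 : 0 < s) (hs2 : s < 2)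
    (hμ : 0 < μ) (hq : 1 < q) (γ : ℝ) (hγ : 0 < γ) :
    (∃ R : ℝ, 0 < R ∧ ∃ u : ℝ → ℝ,
      IsRadialSol n s μ q (Set.Ioc 0 R) u ∧
      Tendsto u (𝓝[>] (0 : ℝ)) (𝓝 γ)) ∧
    (∀ (R₁ R₂ : ℝ), 0 < R₁ → 0 < R₂ → ∀ u₁ u₂ : ℝ → ℝ,
      IsRadialSol n s μ q (Set.Ioc 0 R₁) u₁ →
      IsRadialSol n s μ q (Set.Ioc 0 R₂) u₂ →
      Tendsto u₁ (𝓝[>] (0 : ℝ)) (𝓝 γ) →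
      Tendsto u₂ (𝓝[>] (0 : ℝ)) (𝓝 γ) →
      Set.EqOn u₁ u₂ (Set.Ioc 0 (min R₁ R₂))) := by
  obtain ⟨k, rfl⟩ : ∃ k, n = k + 2 := ⟨n - 2, by omega⟩
  have hk : 1 ≤ k := by omega
  refine ⟨exists_isRadialSol hk q hs0 hs2 hμ hγ, ?_⟩
  intro R₁ R₂ hR₁ hR₂ u₁ u₂ hu₁ hu₂ h₁ h₂
  have hR : 0 < min R₁ R₂ := lt_min hR₁ hR₂
  -- The right endpoint is recovered by continuity.
  refine (eq_of_isRadialSol hk hs0 hs2 hμ hγ hu₁ hu₂ h₁ h₂).of_subset_closure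
    (hu₁.1.continuousOn.mono (Ioc_subset_Ioc_right (min_le_left _ _)))
    (hu₂.1.continuousOn.mono (Ioc_subset_Ioc_right (min_le_right _ _))) Ioo_subset_Ioc_self ?_
  rw [closure_Ioo hR.ne]
  exact Ioc_subset_Icc_self
end
end

section
/- Let 1 < q < 2*(s) − 1. Every positive radial solution u of (E) on some (0,R), R > 0, satisfying limsup_{r→0⁺} r^{(n−2)/2} u(r) < ∞, extends to a positive radial solution of (E) on all of (0,∞); that is, there exists a positive radial solution ũ of (E) on (0,∞) with ũ = u on (0,R). -/
/-!
In the Emden–Fowler variables `t = log r`, `w(t) = r^γ u(r)` with `γ = (n-2)/2`, equation (E) becomes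
`w'' = γ² w - w^p + μ e^{θt} w^q`, where `p = 2*(s) - 1` and `θ = 2 - γ(q-1) > 0`. The energy
`E = w'²/2 - γ²w²/2 + w^{p+1}/(p+1) - μ e^{θt} w^{q+1}/(q+1)` is nonincreasing in `t`
(`emE_antitone`).

The bound on `u` at the origin says that `w` is bounded near `-∞`, and this forces `E ≤ 0`
(`emE_nonpos`): the energy is nonpositive at every local minimum of `w`, so if it were positive near
`-∞` then `w` would be monotone there; a quantitative form of this (`emE_le_of_flat`) shows that `w`
would leave the interval `(0, M]`.

Two things could prevent continuation to the right. Blow-up in finite time is impossible because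
`p > q`, so states of energy at most zero stay bounded for bounded `t` (`apriori`). If `w` reached
zero, then `E = w'²/2 ≤ 0` there, so `w = w' = 0` and `w` would vanish identically by uniqueness
(`EmSol.eq_zero`). Existence on `[t₀, T]` (`em_exists`) comes from the Picard–Lindelöf theorem for
a bounded, globally Lipschitz truncation of the equation, and the solutions for different `T` are
glued by uniqueness (`em_extend`).
-/

open Filter Set Real
open scoped Topology ENNReal

noncomputable section

/-- The critical Sobolev exponent `2* = 2n/(n-2)`. -/
def twoStar (n : ℕ) : ℝ := 2 * (n : ℝ) / ((n : ℝ) - 2)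

/-- `limsup_{r→0⁺} r^{(n-2)/2} u(r) < ∞`, phrased via the `ℝ≥0∞`-valued limsup. -/
def UpliBound (n : ℕ) (u : ℝ → ℝ) : Prop :=
  Filter.limsup (fun r : ℝ => ENNReal.ofReal (r ^ (((n : ℝ) - 2) / 2) * u r))
    (𝓝[>] (0 : ℝ)) < ⊤

/-! ### The Emden–Fowler equation and its energy -/

/-- The nonlinearity of the equation `w'' = γ² w - w^p + μ e^{θt} w^q`, satisfied by
`w(t) = r^γ u(r)`, `r = e^t`, when `u` solves (E). -/
def emF (γ p q μ θ t w : ℝ) : ℝ := γ ^ 2 * w - w ^ p + μ * exp (θ * t) * w ^ q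

/-- The energy of the state `(w, w') = (w, z)` at time `t`. -/
def emE (γ p q μ θ t w z : ℝ) : ℝ :=
  z ^ 2 / 2 - γ ^ 2 * w ^ 2 / 2 + w ^ (p + 1) / (p + 1)
    - μ * exp (θ * t) * (w ^ (q + 1) / (q + 1))

/-- `(w, z)` solves `w' = z`, `z' = emF t w` at every point of `S`, with two-sided derivatives
even when `S` is not open. -/
def EmSol (γ p q μ θ : ℝ) (S : Set ℝ) (w z : ℝ → ℝ) : Prop :=
  ∀ t ∈ S, HasDerivAt w (z t) t ∧ HasDerivAt z (emF γ p q μ θ t (w t)) t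

/-- Along solutions only the explicit time dependence of the energy contributes to its
derivative, so the energy is nonincreasing when `θ > 0`. -/
lemma emE_hasDerivAt {γ p q μ θ : ℝ} (hq : 1 < q) (hp : q < p) {w z : ℝ → ℝ} {t : ℝ}
    (hw : HasDerivAt w (z t) t) (hz : HasDerivAt z (emF γ p q μ θ t (w t)) t) :
    HasDerivAt (fun t => emE γ p q μ θ t (w t) (z t))
      (-(μ * θ * exp (θ * t) * (w t ^ (q + 1) / (q + 1)))) t := by
  have h1 := hw.rpow_const (p := p + 1) (Or.inr (by linarith))
  have h2 := hw.rpow_const (p := q + 1) (Or.inr (by linarith))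
  have h3 : HasDerivAt (fun t => exp (θ * t)) (exp (θ * t) * θ) t := by
    simpa using ((hasDerivAt_id t).const_mul θ).exp
  have h := ((((hz.pow 2).div_const 2).sub (((hw.pow 2).const_mul (γ ^ 2)).div_const 2)).add
    (h1.div_const (p + 1))).sub ((h3.const_mul μ).mul (h2.div_const (q + 1)))
  refine h.congr_deriv ?_
  have e1 : p + 1 - 1 = p := by ring
  have e2 : q + 1 - 1 = q := by ring
  have hp1 : p + 1 ≠ 0 := by linarith
  have hq1 : q + 1 ≠ 0 := by linarith
  simp only [emF, e1, e2]
  field_simp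
  push_cast
  ring

lemma slope_ge {f f' : ℝ → ℝ} {a b C : ℝ} (hab : a ≤ b)
    (hf : ∀ t ∈ Icc a b, HasDerivAt f (f' t) t) (hC : ∀ t ∈ Icc a b, C ≤ f' t) :
    C * (b - a) ≤ f b - f a := by
  refine (convex_Icc a b).mul_sub_le_image_sub_of_le_deriv
    (fun t ht => (hf t ht).continuousAt.continuousWithinAt)
    (fun t ht => (hf t (interior_subset ht)).differentiableAt.differentiableWithinAt) ?_
    a (left_mem_Icc.2 hab) b (right_mem_Icc.2 hab) hab
  intro t ht
  rw [(hf t (interior_subset ht)).deriv]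
  exact hC t (interior_subset ht)

lemma slope_le {f f' : ℝ → ℝ} {a b C : ℝ} (hab : a ≤ b)
    (hf : ∀ t ∈ Icc a b, HasDerivAt f (f' t) t) (hC : ∀ t ∈ Icc a b, f' t ≤ C) :
    f b - f a ≤ C * (b - a) := by
  have := slope_ge (f := fun t => -f t) (f' := fun t => -f' t) (C := -C) hab
    (fun t ht => (hf t ht).neg) (fun t ht => neg_le_neg (hC t ht))
  linarith

lemma emE_antitone {γ p q μ θ : ℝ} (hμ : 0 < μ) (hθ : 0 < θ) (hq : 1 < q) (hp : q < p)
    {w z : ℝ → ℝ} {a b : ℝ} (hab : a ≤ b) (hsol : EmSol γ p q μ θ (Icc a b) w z)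
    (hpos : ∀ t ∈ Icc a b, 0 ≤ w t) :
    emE γ p q μ θ b (w b) (z b) ≤ emE γ p q μ θ a (w a) (z a) := by
  have := slope_le (f := fun t => emE γ p q μ θ t (w t) (z t)) (C := 0) hab
    (fun t ht => emE_hasDerivAt hq hp (hsol t ht).1 (hsol t ht).2) (fun t ht => by
      have h0 := rpow_nonneg (hpos t ht) (q + 1)
      have h1 : 0 < q + 1 := by linarith
      have : 0 ≤ μ * θ * exp (θ * t) * (w t ^ (q + 1) / (q + 1)) := by positivity
      linarith)
  simp only [zero_mul] at this
  linarith

/-! ### Nonpositive energy -/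

/-- If `z` can only cross the level `k` downwards, then before a time where `z ≥ k` it is at
least `k`. -/
lemma fence {z z' : ℝ → ℝ} {b k : ℝ} (hz : ∀ t ≤ b, HasDerivAt z (z' t) t)
    (hk : ∀ t ≤ b, z t = k → z' t < 0) (hb : k ≤ z b) : ∀ t ≤ b, k ≤ z t := by
  intro t ht
  have hd : ∀ x, -b ≤ x → HasDerivAt (fun x => -z (-x)) (z' (-x)) x := by
    intro x hx
    exact (HasDerivAt.scomp x (hz (-x) (by linarith)) (hasDerivAt_neg x)).neg.congr_deriv (by simp)
  have := image_le_of_deriv_right_lt_deriv_boundary (f := fun x => -z (-x))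
    (f' := fun x => z' (-x)) (a := -b) (b := -t) (B := fun _ => -k) (B' := fun _ => 0)
    (fun x hx => (hd x hx.1).continuousAt.continuousWithinAt)
    (fun x hx => (hd x hx.1).hasDerivWithinAt) (by simpa using hb)
    (fun x => hasDerivAt_const x _)
    (fun x hx h => hk (-x) (by linarith [hx.1]) (by linarith))
    (right_mem_Icc.2 (by linarith))
  simpa using this

/-- Where `w'` is almost zero and `w''` almost nonnegative, the energy is almost nonpositive.
For `ε = 0`: the energy is nonpositive at a local minimum, because `2 < q + 1 < p + 1`. -/
lemma emE_le_of_flat {γ p q μ θ t w z ε M : ℝ} (hμ : 0 < μ) (hq : 1 < q) (hp : q < p)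
    (hw : 0 < w) (hwM : w ≤ M) (hε : 0 ≤ ε) (hz : |z| ≤ ε)
    (hF : -ε ≤ emF γ p q μ θ t w) :
    emE γ p q μ θ t w z ≤ ε ^ 2 / 2 + M * ε := by
  have hX : w ^ (p + 1) = w * w ^ p := by rw [rpow_add_one hw.ne']; ring
  have hY : w ^ (q + 1) = w * w ^ q := by rw [rpow_add_one hw.ne']; ring
  have hz2 : z ^ 2 ≤ ε ^ 2 := sq_le_sq' (abs_le.1 hz).1 (abs_le.1 hz).2
  unfold emF at hF
  unfold emE
  have hY0 : 0 ≤ μ * exp (θ * t) * w ^ (q + 1) := by positivity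
  have hp1 : 0 < p + 1 := by linarith
  have hwF : w ^ (p + 1) ≤ γ ^ 2 * w ^ 2 + μ * exp (θ * t) * w ^ (q + 1) + M * ε := by
    have h1 := mul_le_mul_of_nonneg_left hF hw.le
    have h2 := mul_le_mul_of_nonneg_right hwM hε
    rw [hX, hY]
    nlinarith
  have h1 := div_le_div_of_nonneg_right hwF hp1.le
  have e1 : γ ^ 2 * w ^ 2 / (p + 1) ≤ γ ^ 2 * w ^ 2 / 2 :=
    div_le_div_of_nonneg_left (by positivity) (by norm_num) (by linarith)
  have e2 : μ * exp (θ * t) * w ^ (q + 1) / (p + 1) ≤ μ * exp (θ * t) * w ^ (q + 1) / (q + 1) :=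
    div_le_div_of_nonneg_left hY0 (by linarith) (by linarith)
  have e3 : M * ε / (p + 1) ≤ M * ε :=
    div_le_self (mul_nonneg (by linarith) hε) (by linarith)
  rw [add_div, add_div] at h1
  rw [← mul_div_assoc]
  linarith

/-- A positive solution which is bounded near `-∞` has nonpositive energy. If the energy were at
least `c > 0` near `-∞`, then `z = w'` would decrease at a definite rate whenever `|z| ≤ ε`, so
going backwards in time `z` would stay either above `ε` or below `-ε`, and `w` would become
negative or unbounded. -/
lemma emE_nonpos {γ p q μ θ : ℝ} (hμ : 0 < μ) (hθ : 0 < θ) (hq : 1 < q) (hp : q < p)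
    {w z : ℝ → ℝ} {t₁ T₀ M : ℝ} (hsol : EmSol γ p q μ θ (Iio t₁) w z)
    (hpos : ∀ t < t₁, 0 < w t) (hM : ∀ t ≤ T₀, w t ≤ M) :
    ∀ t < t₁, emE γ p q μ θ t (w t) (z t) ≤ 0 := by
  intro t' ht'
  by_contra! hc
  set c := emE γ p q μ θ t' (w t') (z t') with hcdef
  set a := min t' T₀ with ha
  have hat : a ≤ t' := min_le_left _ _
  have haT : a ≤ T₀ := min_le_right _ _
  have hlt : ∀ t ≤ a, t < t₁ := fun t ht => by linarith
  have hE : ∀ t ≤ a, c ≤ emE γ p q μ θ t (w t) (z t) := fun t ht =>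
    emE_antitone hμ hθ hq hp (ht.trans hat)
      (fun x hx => hsol x (lt_of_le_of_lt hx.2 ht'))
      (fun x hx => (hpos x (lt_of_le_of_lt hx.2 ht')).le)
  have hM0 : 0 < M := (hpos a (hlt a le_rfl)).trans_le (hM a haT)
  obtain ⟨ε, hε, hεc⟩ : ∃ ε > 0, ε ^ 2 / 2 + M * ε < c := by
    refine ⟨min 1 (c / (M + 1)), by positivity, ?_⟩
    have h1 : min 1 (c / (M + 1)) ≤ 1 := min_le_left _ _
    have h2 : min 1 (c / (M + 1)) * (M + 1) ≤ c :=
      (le_div_iff₀ (by positivity)).1 (min_le_right _ _)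
    have h0 : 0 < min 1 (c / (M + 1)) := by positivity
    nlinarith
  have key : ∀ t ≤ a, |z t| ≤ ε → emF γ p q μ θ t (w t) < -ε := by
    intro t ht hz
    by_contra! hF
    have := emE_le_of_flat hμ hq hp (hpos t (hlt t ht)) (hM t (ht.trans haT)) hε.le hz hF
    linarith [hE t ht]
  have hdw : ∀ t ≤ a, HasDerivAt w (z t) t := fun t ht => (hsol t (hlt t ht)).1
  have hdz : ∀ t ≤ a, HasDerivAt z (emF γ p q μ θ t (w t)) t :=
    fun t ht => (hsol t (hlt t ht)).2
  -- `z ≥ ε` on a left half-line: `w` becomes nonpositive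
  by_cases hA : ∃ b ≤ a, ε ≤ z b
  · obtain ⟨b, hb, hzb⟩ := hA
    have hf := fence (k := ε) (fun t ht => hdz t (ht.trans hb)) (fun t ht h => by
      have := key t (ht.trans hb) (by rw [h, abs_of_pos hε])
      linarith) hzb
    have hN : 0 ≤ w b / ε := div_nonneg (hpos b (hlt b hb)).le hε.le
    have := slope_ge (a := b - w b / ε) (b := b) (C := ε) (by linarith)
      (fun t ht => hdw t (ht.2.trans hb)) (fun t ht => hf t ht.2)
    have e : ε * (b - (b - w b / ε)) = w b := by field_simp; ring
    have := hpos (b - w b / ε) (hlt _ (by linarith))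
    linarith
  push Not at hA
  -- `-ε ≤ z < ε` on a left half-line: impossible because there `z' < -ε`
  by_cases hB : ∃ b ≤ a, -ε ≤ z b
  · obtain ⟨b, hb, hzb⟩ := hB
    have hf := fence (k := -ε) (fun t ht => hdz t (ht.trans hb)) (fun t ht h => by
      have := key t (ht.trans hb) (by rw [h, abs_neg, abs_of_pos hε])
      linarith) hzb
    have := slope_le (a := b - 3) (b := b) (C := -ε) (by linarith)
      (fun t ht => hdz t (ht.2.trans hb)) (fun t ht => (key t (ht.2.trans hb)
        (abs_le.2 ⟨hf t ht.2, (hA t (ht.2.trans hb)).le⟩)).le)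
    have := hA (b - 3) (by linarith)
    linarith
  push Not at hB
  -- `z < -ε` on a left half-line: `w` exceeds `M`
  have hN : 0 ≤ M / ε := by positivity
  have := slope_le (a := a - M / ε) (b := a) (C := -ε) (by linarith)
    (fun t ht => hdw t ht.2) (fun t ht => (hB t ht.2).le)
  have e : -ε * (a - (a - M / ε)) = -M := by field_simp; ring
  have := hM (a - M / ε) (by linarith)
  have := hpos a (hlt a le_rfl)
  linarith

/-! ### Truncated equation -/

lemma rpow_lip {p K a b : ℝ} (hp : 1 < p) (ha : a ∈ Icc 0 K) (hb : b ∈ Icc 0 K) :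
    |a ^ p - b ^ p| ≤ p * K ^ (p - 1) * |a - b| := by
  refine (convex_Icc (0 : ℝ) K).norm_image_sub_le_of_norm_hasDerivWithin_le
    (f := fun x => x ^ p) (f' := fun x => p * x ^ (p - 1)) (C := p * K ^ (p - 1))
    (fun x _ => (hasDerivAt_rpow_const (Or.inr hp.le)).hasDerivWithinAt) ?_ hb ha
  intro x hx
  have h0 := rpow_nonneg hx.1 (p - 1)
  rw [Real.norm_of_nonneg (mul_nonneg (by linarith) h0)]
  exact mul_le_mul_of_nonneg_left (rpow_le_rpow hx.1 hx.2 (by linarith)) (by linarith)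

/-- The first-order field `(w, z) ↦ (z, emF t w)` with `w` clamped to `[0, K]` and `z` clamped to
`[-K, K]`. It is bounded and globally Lipschitz, uniformly for bounded `t`. -/
def truncV (γ p q μ θ K t : ℝ) (y : ℝ × ℝ) : ℝ × ℝ :=
  (max (-K) (min y.2 K), emF γ p q μ θ t (max 0 (min y.1 K)))

lemma truncV_eq {γ p q μ θ K t w z : ℝ} (hw0 : 0 ≤ w) (hwK : w ≤ K) (hz : |z| ≤ K) :
    truncV γ p q μ θ K t (w, z) = (z, emF γ p q μ θ t w) := by
  obtain ⟨h1, h2⟩ := abs_le.1 hz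
  simp [truncV, min_eq_left h2, min_eq_left hwK, max_eq_right h1, max_eq_right hw0]

lemma clamp_mem_s7 {K x : ℝ} (hK : 0 ≤ K) : max 0 (min x K) ∈ Icc 0 K :=
  ⟨le_max_left _ _, max_le hK (min_le_right _ _)⟩

lemma clamp_lip (m K a b : ℝ) : |max m (min a K) - max m (min b K)| ≤ |a - b| := by
  refine (abs_max_sub_max_le_max _ _ _ _).trans ?_
  refine max_le (by simp) ?_
  refine (abs_min_sub_min_le_max _ _ _ _).trans ?_
  simp

lemma truncV_lip {γ p q μ θ K T : ℝ} (hμ : 0 < μ) (hθ : 0 < θ) (hq : 1 < q) (hp : q < p)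
    (hK : 0 ≤ K) : ∃ L : NNReal, ∀ t ≤ T, LipschitzWith L (truncV γ p q μ θ K t) := by
  set c := γ ^ 2 + p * K ^ (p - 1) + μ * exp (θ * T) * (q * K ^ (q - 1)) with hc
  have hp1 : 1 < p := hq.trans hp
  have a1 : 0 ≤ K ^ (p - 1) := rpow_nonneg hK _
  have a2 : 0 ≤ K ^ (q - 1) := rpow_nonneg hK _
  have hc0 : 0 ≤ c := by positivity
  refine ⟨Real.toNNReal (1 + c), fun t ht => LipschitzWith.of_dist_le_mul fun y y' => ?_⟩
  have hd1 : |y.1 - y'.1| ≤ dist y y' := le_max_left (dist y.1 y'.1) (dist y.2 y'.2)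
  have hd2 : |y.2 - y'.2| ≤ dist y y' := le_max_right (dist y.1 y'.1) (dist y.2 y'.2)
  have hd0 : 0 ≤ dist y y' := dist_nonneg
  rw [Real.coe_toNNReal _ (by positivity)]
  refine max_le ?_ ?_
  · refine (clamp_lip (-K) K y.2 y'.2).trans (hd2.trans ?_)
    nlinarith
  · have hl := clamp_lip 0 K y.1 y'.1
    have hm : max 0 (min y.1 K) ∈ Icc 0 K := clamp_mem_s7 hK
    have hm' : max 0 (min y'.1 K) ∈ Icc 0 K := clamp_mem_s7 hK
    change |emF γ p q μ θ t (max 0 (min y.1 K)) - emF γ p q μ θ t (max 0 (min y'.1 K))| ≤ _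
    generalize max 0 (min y.1 K) = a at *
    generalize max 0 (min y'.1 K) = b at *
    have h1 := rpow_lip hp1 hm hm'
    have h2 := rpow_lip hq hm hm'
    have hexp : exp (θ * t) ≤ exp (θ * T) := exp_le_exp.2 (by nlinarith)
    have e : emF γ p q μ θ t a - emF γ p q μ θ t b
        = γ ^ 2 * (a - b) - (a ^ p - b ^ p) + μ * exp (θ * t) * (a ^ q - b ^ q) := by
      unfold emF; ring
    have hle : |emF γ p q μ θ t a - emF γ p q μ θ t b| ≤ c * |a - b| := by
      rw [e]
      calc _ ≤ |γ ^ 2 * (a - b)| + |a ^ p - b ^ p| + |μ * exp (θ * t) * (a ^ q - b ^ q)| :=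
            (abs_add_le _ _).trans (add_le_add_left (abs_sub _ _) _)
        _ = γ ^ 2 * |a - b| + |a ^ p - b ^ p| + μ * exp (θ * t) * |a ^ q - b ^ q| := by
            rw [abs_mul, abs_mul, abs_of_nonneg (sq_nonneg γ),
              abs_of_nonneg (by positivity : 0 ≤ μ * exp (θ * t))]
        _ ≤ γ ^ 2 * |a - b| + p * K ^ (p - 1) * |a - b|
              + μ * exp (θ * T) * (q * K ^ (q - 1) * |a - b|) := by gcongr
        _ = c * |a - b| := by rw [hc]; ring
    nlinarith [mul_le_mul_of_nonneg_left (hl.trans hd1) hc0]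

lemma truncV_bdd {γ p q μ θ K T : ℝ} (hμ : 0 < μ) (hθ : 0 < θ) (hq : 1 < q) (hp : q < p)
    (hK : 0 ≤ K) : ∃ L : NNReal, ∀ t ≤ T, ∀ y, ‖truncV γ p q μ θ K t y‖ ≤ L := by
  have a1 : 0 ≤ K ^ p := rpow_nonneg hK _
  have a2 : 0 ≤ K ^ q := rpow_nonneg hK _
  set c := γ ^ 2 * K + K ^ p + μ * exp (θ * T) * K ^ q with hc
  have hc0 : 0 ≤ c := by positivity
  refine ⟨Real.toNNReal (K + c), fun t ht y => ?_⟩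
  rw [Real.coe_toNNReal _ (by positivity)]
  refine max_le ?_ ?_
  · change |max (-K) (min y.2 K)| ≤ _
    rw [abs_le]
    constructor
    · linarith [le_max_left (-K) (min y.2 K)]
    · have : max (-K) (min y.2 K) ≤ K := max_le (by linarith) (min_le_right _ _)
      linarith
  · have hm : max 0 (min y.1 K) ∈ Icc 0 K := clamp_mem_s7 hK
    change |emF γ p q μ θ t (max 0 (min y.1 K))| ≤ _
    generalize max 0 (min y.1 K) = a at *
    have hexp : exp (θ * t) ≤ exp (θ * T) := exp_le_exp.2 (by nlinarith)
    have h1 : a ^ p ≤ K ^ p := rpow_le_rpow hm.1 hm.2 (by linarith)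
    have h2 : a ^ q ≤ K ^ q := rpow_le_rpow hm.1 hm.2 (by linarith)
    have h3 : 0 ≤ a ^ p := rpow_nonneg hm.1 _
    have h4 : 0 ≤ a ^ q := rpow_nonneg hm.1 _
    have h5 : μ * exp (θ * t) * a ^ q ≤ μ * exp (θ * T) * K ^ q := by gcongr
    have h6 : γ ^ 2 * a ≤ γ ^ 2 * K := mul_le_mul_of_nonneg_left hm.2 (sq_nonneg _)
    have h7 : 0 ≤ μ * exp (θ * t) * a ^ q := by positivity
    have h8 : 0 ≤ γ ^ 2 * a := mul_nonneg (sq_nonneg _) hm.1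
    unfold emF
    rw [abs_le]
    constructor <;> linarith

lemma truncV_cont {γ p q μ θ K : ℝ} (y : ℝ × ℝ) :
    Continuous (fun t => truncV γ p q μ θ K t y) := by
  unfold truncV emF
  fun_prop

lemma truncV_exists {γ p q μ θ K : ℝ} (hμ : 0 < μ) (hθ : 0 < θ) (hq : 1 < q) (hp : q < p)
    (hK : 0 ≤ K) {t₀ T : ℝ} (hT : t₀ ≤ T) (x₀ : ℝ × ℝ) :
    ∃ y : ℝ → ℝ × ℝ, y t₀ = x₀ ∧
      ∀ t ∈ Icc t₀ T, HasDerivAt y (truncV γ p q μ θ K t (y t)) t := by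
  obtain ⟨L, hL⟩ := truncV_lip (γ := γ) (T := T + 1) hμ hθ hq hp hK
  obtain ⟨B, hB⟩ := truncV_bdd (γ := γ) (T := T + 1) hμ hθ hq hp hK
  have ht₀ : t₀ ∈ Icc (t₀ - 1) (T + 1) := ⟨by linarith, by linarith⟩
  have hpl : IsPicardLindelof (truncV γ p q μ θ K) (⟨t₀, ht₀⟩ : Icc (t₀ - 1) (T + 1)) x₀
      (B * Real.toNNReal (T - t₀ + 1)) 0 B L :=
    { lipschitzOnWith := fun t ht => (hL t ht.2).lipschitzOnWith
      continuousOn := fun x _ => (truncV_cont x).continuousOn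
      norm_le := fun t ht x _ => hB t ht.2 x
      mul_max_le := by
        rw [NNReal.coe_mul, Real.coe_toNNReal _ (by linarith), NNReal.coe_zero, sub_zero]
        refine mul_le_mul_of_nonneg_left (max_le ?_ ?_) B.2
        · change T + 1 - t₀ ≤ _
          linarith
        · change t₀ - (t₀ - 1) ≤ _
          linarith }
  obtain ⟨y, hy0, hy⟩ := hpl.exists_eq_forall_mem_Icc_hasDerivWithinAt₀
  exact ⟨y, hy0, fun t ht => (hy t ⟨by linarith [ht.1], by linarith [ht.2]⟩).hasDerivAt
    (Icc_mem_nhds (by linarith [ht.1]) (by linarith [ht.2]))⟩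

/-! ### Uniqueness and a priori bounds -/

lemma EmSol.trunc {γ p q μ θ K : ℝ} {w z : ℝ → ℝ} {S : Set ℝ} {t : ℝ}
    (h : EmSol γ p q μ θ S w z) (ht : t ∈ S) (hw0 : 0 ≤ w t) (hwK : w t ≤ K) (hz : |z t| ≤ K) :
    HasDerivAt (fun t => (w t, z t)) (truncV γ p q μ θ K t (w t, z t)) t := by
  rw [truncV_eq hw0 hwK hz]
  exact (h t ht).1.prodMk (h t ht).2

lemma EmSol.bdd {γ p q μ θ : ℝ} {w z : ℝ → ℝ} {a b : ℝ}
    (h : EmSol γ p q μ θ (Icc a b) w z) :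
    ∃ K, 0 ≤ K ∧ ∀ t ∈ Icc a b, w t ≤ K ∧ |z t| ≤ K := by
  obtain ⟨K₁, h₁⟩ := isCompact_Icc.exists_bound_of_continuousOn (f := w) (s := Icc a b)
    (fun t ht => (h t ht).1.continuousAt.continuousWithinAt)
  obtain ⟨K₂, h₂⟩ := isCompact_Icc.exists_bound_of_continuousOn (f := z) (s := Icc a b)
    (fun t ht => (h t ht).2.continuousAt.continuousWithinAt)
  refine ⟨max 0 (max K₁ K₂), le_max_left _ _, fun t ht => ⟨?_, ?_⟩⟩
  · exact (le_abs_self _).trans ((h₁ t ht).trans ((le_max_left _ _).trans (le_max_right _ _)))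
  · exact (h₂ t ht).trans ((le_max_right _ _).trans (le_max_right _ _))

lemma EmSol.unique {γ p q μ θ : ℝ} (hμ : 0 < μ) (hθ : 0 < θ) (hq : 1 < q) (hp : q < p)
    {w z w' z' : ℝ → ℝ} {a b : ℝ}
    (h : EmSol γ p q μ θ (Icc a b) w z) (h' : EmSol γ p q μ θ (Icc a b) w' z')
    (hw : ∀ t ∈ Icc a b, 0 ≤ w t) (hw' : ∀ t ∈ Icc a b, 0 ≤ w' t)
    (ha : w a = w' a) (ha' : z a = z' a) : ∀ t ∈ Icc a b, w t = w' t ∧ z t = z' t := by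
  obtain ⟨K₁, hK₁, hb₁⟩ := h.bdd
  obtain ⟨K₂, hK₂, hb₂⟩ := h'.bdd
  have m1 := le_max_left K₁ K₂
  have m2 := le_max_right K₁ K₂
  obtain ⟨L, hL⟩ := truncV_lip (γ := γ) (T := b) hμ hθ hq hp (hK₁.trans m1)
  have d1 : ∀ t ∈ Icc a b, _ := fun t ht => h.trunc (K := max K₁ K₂) ht (hw t ht)
    ((hb₁ t ht).1.trans m1) ((hb₁ t ht).2.trans m1)
  have d2 : ∀ t ∈ Icc a b, _ := fun t ht => h'.trunc (K := max K₁ K₂) ht (hw' t ht)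
    ((hb₂ t ht).1.trans m2) ((hb₂ t ht).2.trans m2)
  have := ODE_solution_unique_of_mem_Icc_right (v := truncV γ p q μ θ (max K₁ K₂))
    (s := fun _ => univ) (K := L)
    (f := fun t => (w t, z t)) (g := fun t => (w' t, z' t)) (a := a) (b := b)
    (fun t ht => (hL t ht.2.le).lipschitzOnWith)
    (fun t ht => (d1 t ht).continuousAt.continuousWithinAt)
    (fun t ht => (d1 t (Ico_subset_Icc_self ht)).hasDerivWithinAt) (fun _ _ => mem_univ _)
    (fun t ht => (d2 t ht).continuousAt.continuousWithinAt)
    (fun t ht => (d2 t (Ico_subset_Icc_self ht)).hasDerivWithinAt) (fun _ _ => mem_univ _)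
    (Prod.ext ha ha')
  exact fun t ht => Prod.ext_iff.1 (this ht)

/-- Backward uniqueness for the trivial solution. -/
lemma EmSol.eq_zero {γ p q μ θ : ℝ} (hμ : 0 < μ) (hθ : 0 < θ) (hq : 1 < q) (hp : q < p)
    {w z : ℝ → ℝ} {a b : ℝ} (h : EmSol γ p q μ θ (Icc a b) w z)
    (hw : ∀ t ∈ Icc a b, 0 ≤ w t) (hb : w b = 0) (hb' : z b = 0) :
    ∀ t ∈ Icc a b, w t = 0 := by
  obtain ⟨K, hK, hbd⟩ := h.bdd
  obtain ⟨L, hL⟩ := truncV_lip (γ := γ) (T := b) hμ hθ hq hp hK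
  have d1 : ∀ t ∈ Icc a b, _ := fun t ht =>
    h.trunc (K := K) ht (hw t ht) (hbd t ht).1 (hbd t ht).2
  have d2 : ∀ t, HasDerivAt (fun _ : ℝ => ((0 : ℝ), (0 : ℝ))) (truncV γ p q μ θ K t (0, 0)) t := by
    intro t
    rw [truncV_eq le_rfl hK (by simpa using hK)]
    have : emF γ p q μ θ t 0 = 0 := by
      simp [emF, zero_rpow (by linarith : p ≠ 0), zero_rpow (by linarith : q ≠ 0)]
    rw [this]
    exact hasDerivAt_const t _
  have := ODE_solution_unique_of_mem_Icc_left (v := truncV γ p q μ θ K)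
    (s := fun _ => univ) (K := L)
    (f := fun t => (w t, z t)) (g := fun _ => (0, 0)) (a := a) (b := b)
    (fun t ht => (hL t ht.2).lipschitzOnWith)
    (fun t ht => (d1 t ht).continuousAt.continuousWithinAt)
    (fun t ht => (d1 t (Ioc_subset_Icc_self ht)).hasDerivWithinAt) (fun _ _ => mem_univ _)
    continuousOn_const
    (fun t ht => (d2 t).hasDerivWithinAt) (fun _ _ => mem_univ _)
    (Prod.ext hb hb')
  exact fun t ht => (Prod.ext_iff.1 (this ht)).1

/-- Since `p > q`, the states of nonpositive energy are bounded, uniformly for times `t ≤ T`. -/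
lemma apriori {γ p q μ θ : ℝ} (hμ : 0 < μ) (hθ : 0 < θ) (hq : 1 < q) (hp : q < p) (T : ℝ) :
    ∃ K, 0 < K ∧ ∀ t ≤ T, ∀ w z, 0 ≤ w → emE γ p q μ θ t w z ≤ 0 → w < K ∧ |z| < K := by
  have hp1 : 0 < p + 1 := by linarith
  have hq1 : 0 < q + 1 := by linarith
  set c := μ * exp (θ * T) with hc
  have hc0 : 0 < c := by positivity
  obtain ⟨X, hX⟩ := eventually_atTop.1 ((tendsto_rpow_atTop (sub_pos.2 hp)).eventually_ge_atTop
    ((p + 1) * (γ ^ 2 / 2 + c + 1)))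
  set K₁ := max X 1 with hK₁
  have hK₁1 : 1 ≤ K₁ := le_max_right _ _
  set A := γ ^ 2 * K₁ ^ 2 + 2 * (c * K₁ ^ (q + 1)) with hA
  have hA0 : 0 ≤ A := by positivity
  refine ⟨max K₁ (A + 1), by positivity, fun t ht w z hw hE => ?_⟩
  have hexp : μ * exp (θ * t) ≤ c := mul_le_mul_of_nonneg_left (exp_le_exp.2 (by nlinarith)) hμ.le
  have hwq : 0 ≤ w ^ (q + 1) := rpow_nonneg hw _
  have hY : μ * exp (θ * t) * (w ^ (q + 1) / (q + 1)) ≤ c * w ^ (q + 1) :=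
    mul_le_mul hexp (div_le_self hwq (by linarith)) (by positivity) hc0.le
  unfold emE at hE
  have hwK : w < K₁ := by
    by_contra! hge
    have hw1 : 1 ≤ w := hK₁1.trans hge
    have hw0 : 0 < w := by linarith
    have h1 := hX w ((le_max_left _ _).trans hge)
    have h2 : w ^ (p + 1) = w ^ (q + 1) * w ^ (p - q) := by
      rw [← rpow_add hw0]; congr 1; ring
    have h3 : w ^ 2 ≤ w ^ (q + 1) := by
      rw [← rpow_natCast w 2]
      exact rpow_le_rpow_of_exponent_le hw1 (by push_cast; linarith)
    have h4 : 0 < w ^ (q + 1) := rpow_pos_of_pos hw0 _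
    have h5 : w ^ (q + 1) * (γ ^ 2 / 2 + c + 1) ≤ w ^ (p + 1) / (p + 1) := by
      rw [le_div_iff₀ hp1, h2]
      nlinarith [mul_le_mul_of_nonneg_left h1 hwq]
    have h6 := mul_le_mul_of_nonneg_left h3 (sq_nonneg γ)
    nlinarith [sq_nonneg z]
  refine ⟨hwK.trans_le (le_max_left _ _), lt_of_lt_of_le ?_ (le_max_right _ _)⟩
  have g1 : w ^ (q + 1) ≤ K₁ ^ (q + 1) := rpow_le_rpow hw hwK.le hq1.le
  have g2 : w ^ 2 ≤ K₁ ^ 2 := pow_le_pow_left₀ hw hwK.le 2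
  have g3 : 0 ≤ w ^ (p + 1) / (p + 1) := div_nonneg (rpow_nonneg hw _) hp1.le
  have g4 : z ^ 2 ≤ A := by
    have := mul_le_mul_of_nonneg_left g2 (sq_nonneg γ)
    have := mul_le_mul_of_nonneg_left g1 hc0.le
    linarith
  refine abs_lt_of_sq_lt_sq ?_ (by linarith)
  nlinarith

/-! ### Global continuation -/

/-- Positive solutions starting with nonpositive energy exist on every interval `[t₀, T]`. The
solution of the truncated equation can leave the region where the truncation is inactive only
through `w = 0`; there its energy is `z² / 2 ≤ 0`, so `w = z = 0` and `w` vanishes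
identically. -/
lemma em_exists {γ p q μ θ : ℝ} (hμ : 0 < μ) (hθ : 0 < θ) (hq : 1 < q) (hp : q < p)
    {t₀ T w₀ z₀ : ℝ} (hT : t₀ ≤ T) (hw₀ : 0 < w₀) (hE : emE γ p q μ θ t₀ w₀ z₀ ≤ 0) :
    ∃ w z : ℝ → ℝ, w t₀ = w₀ ∧ z t₀ = z₀ ∧ (∀ t ∈ Icc t₀ T, 0 < w t) ∧
      EmSol γ p q μ θ (Icc t₀ T) w z := by
  obtain ⟨K, hK, hap⟩ := apriori (γ := γ) hμ hθ hq hp T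
  obtain ⟨y, hy0, hy⟩ := truncV_exists (γ := γ) hμ hθ hq hp hK.le hT (w₀, z₀)
  have hcont : ContinuousOn y (Icc t₀ T) := fun t ht => (hy t ht).continuousAt.continuousWithinAt
  have hsol : ∀ S ⊆ Icc t₀ T, (∀ t ∈ S, 0 ≤ (y t).1 ∧ (y t).1 ≤ K ∧ |(y t).2| ≤ K) →
      EmSol γ p q μ θ S (fun t => (y t).1) (fun t => (y t).2) := by
    intro S hS h t ht
    obtain ⟨h1, h2, h3⟩ := h t ht
    have hd := hy t (hS ht)
    rw [← Prod.mk.eta (p := y t), truncV_eq h1 h2 h3] at hd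
    exact ⟨(hasFDerivAt_fst (𝕜 := ℝ) (p := y t)).comp_hasDerivAt t hd,
      (hasFDerivAt_snd (𝕜 := ℝ) (p := y t)).comp_hasDerivAt t hd⟩
  set G : Set (ℝ × ℝ) := {y | 0 < y.1 ∧ y.1 < K ∧ |y.2| < K} with hG
  have hGo : IsOpen G := by
    refine (isOpen_lt continuous_const continuous_fst).inter
      ((isOpen_lt continuous_fst continuous_const).inter
        (isOpen_lt continuous_snd.abs continuous_const))
  have hall : ∀ t ∈ Icc t₀ T, y t ∈ G := by
    by_contra! hbad
    obtain ⟨t', ht', hbad⟩ := hbad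
    have hclosed : IsClosed (Icc t₀ T ∩ y ⁻¹' Gᶜ) :=
      hcont.preimage_isClosed_of_isClosed isClosed_Icc hGo.isClosed_compl
    obtain ⟨τ, ⟨hτ, hτG⟩, hmin⟩ :=
      (isCompact_Icc.of_isClosed_subset hclosed inter_subset_left).exists_isLeast
        ⟨t', ht', hbad⟩
    have hbefore : ∀ t ∈ Ico t₀ τ, y t ∈ G := by
      intro t ht
      by_contra hn
      have := hmin ⟨⟨ht.1, ht.2.le.trans hτ.2⟩, hn⟩
      exact absurd ht.2 (not_lt.2 this)
    have hstart : y t₀ ∈ G := by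
      rw [hy0]
      exact ⟨hw₀, hap t₀ hT w₀ z₀ hw₀.le hE⟩
    have hlt : t₀ < τ := by
      rcases hτ.1.lt_or_eq with h | h
      · exact h
      · exact absurd (h ▸ hstart) hτG
    have hC : IsClosed {y : ℝ × ℝ | 0 ≤ y.1 ∧ y.1 ≤ K ∧ |y.2| ≤ K} :=
      (isClosed_le continuous_const continuous_fst).inter
      ((isClosed_le continuous_fst continuous_const).inter
        (isClosed_le continuous_snd.abs continuous_const))
    have hGC : ∀ y ∈ G, 0 ≤ y.1 ∧ y.1 ≤ K ∧ |y.2| ≤ K :=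
      fun y h => ⟨h.1.le, h.2.1.le, h.2.2.le⟩
    have hτC : y τ ∈ {y : ℝ × ℝ | 0 ≤ y.1 ∧ y.1 ≤ K ∧ |y.2| ≤ K} :=
      hC.mem_of_tendsto ((hy τ hτ).continuousAt.tendsto.mono_left nhdsWithin_le_nhds)
        (Filter.mem_of_superset (Ioo_mem_nhdsLT hlt)
          (fun t ht => hGC _ (hbefore t (Ioo_subset_Ico_self ht))))
    have hCall : ∀ t ∈ Icc t₀ τ, 0 ≤ (y t).1 ∧ (y t).1 ≤ K ∧ |(y t).2| ≤ K := by
      intro t ht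
      rcases ht.2.lt_or_eq with h | h
      · exact hGC _ (hbefore t ⟨ht.1, h⟩)
      · rw [h]; exact hτC
    have hs := hsol (Icc t₀ τ) (Icc_subset_Icc_right hτ.2) hCall
    have hEτ := emE_antitone hμ hθ hq hp hlt.le hs (fun t ht => (hCall t ht).1)
    rw [hy0] at hEτ
    replace hEτ := hEτ.trans hE
    have hb := hap τ hτ.2 _ _ hτC.1 hEτ
    have hw0 : (y τ).1 = 0 := by
      by_contra hne
      exact hτG ⟨lt_of_le_of_ne hτC.1 (Ne.symm hne), hb⟩
    have hz0 : (y τ).2 = 0 := by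
      simp only [emE, hw0, zero_rpow (by linarith : p + 1 ≠ 0),
        zero_rpow (by linarith : q + 1 ≠ 0), zero_div, mul_zero, sub_zero, add_zero, ne_eq,
        OfNat.ofNat_ne_zero, not_false_eq_true, zero_pow] at hEτ
      have : (y τ).2 ^ 2 = 0 := le_antisymm (by linarith) (sq_nonneg _)
      simpa using this
    have := hs.eq_zero hμ hθ hq hp (fun t ht => (hCall t ht).1) hw0 hz0 t₀
      (left_mem_Icc.2 hlt.le)
    simp only [hy0] at this
    exact hw₀.ne' this
  refine ⟨fun t => (y t).1, fun t => (y t).2, by simp [hy0], by simp [hy0],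
    fun t ht => (hall t ht).1, hsol _ subset_rfl fun t ht => ?_⟩
  exact ⟨(hall t ht).1.le, (hall t ht).2.1.le, (hall t ht).2.2.le⟩

/-- A positive solution on a left half-line, bounded near `-∞`, extends to a positive solution on
the whole line. -/
lemma em_extend {γ p q μ θ : ℝ} (hμ : 0 < μ) (hθ : 0 < θ) (hq : 1 < q) (hp : q < p)
    {w z : ℝ → ℝ} {t₁ T₀ M : ℝ} (hsol : EmSol γ p q μ θ (Iio t₁) w z)
    (hpos : ∀ t < t₁, 0 < w t) (hM : ∀ t ≤ T₀, w t ≤ M) :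
    ∃ W Z : ℝ → ℝ, (∀ t, 0 < W t) ∧ EmSol γ p q μ θ univ W Z ∧ ∀ t < t₁, W t = w t := by
  have hE := emE_nonpos hμ hθ hq hp hsol hpos hM
  obtain ⟨t₀, ht₀⟩ : ∃ t₀, t₀ < t₁ := ⟨t₁ - 1, by linarith⟩
  -- At `t ≥ t₁` glue solutions `ws T` on `[t₀, T]`, taking `T = t + 1`. The starting time `t₀` lies
  -- before `t₁`, so by uniqueness the pieces overlap on open sets.
  have hex := fun T : ℝ => em_exists hμ hθ hq hp (le_max_left t₀ T) (hpos t₀ ht₀) (hE t₀ ht₀)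
  choose ws zs hw0 hz0 hwpos hs using hex
  have hsub : ∀ {x T : ℝ}, x ≤ T → Icc t₀ x ⊆ Icc t₀ (max t₀ T) :=
    fun h => Icc_subset_Icc_right (h.trans (le_max_right _ _))
  have hs' : ∀ {x T : ℝ}, x ≤ T → EmSol γ p q μ θ (Icc t₀ x) (ws T) (zs T) :=
    fun h t ht => hs _ t (hsub h ht)
  have hp' : ∀ {x T : ℝ}, x ≤ T → ∀ t ∈ Icc t₀ x, 0 ≤ ws T t :=
    fun h t ht => (hwpos _ t (hsub h ht)).le
  classical
  refine ⟨fun t => if t < t₁ then w t else ws (t + 1) t,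
    fun t => if t < t₁ then z t else zs (t + 1) t, fun t => ?_, fun t _ => ?_, fun t ht => ?_⟩
  · beta_reduce
    split_ifs with h
    · exact hpos t h
    · exact hwpos (t + 1) t (hsub (by linarith : t ≤ t + 1) (right_mem_Icc.2 (by linarith)))
  · by_cases h : t < t₁
    · have hev : ∀ᶠ x in 𝓝 t, x < t₁ := Iio_mem_nhds h
      have hd := hsol t h
      refine ⟨?_, ?_⟩
      · simp only [if_pos h]
        exact hd.1.congr_of_eventuallyEq (hev.mono fun x hx => if_pos hx)
      · simp only [if_pos h]
        exact hd.2.congr_of_eventuallyEq (hev.mono fun x hx => if_pos hx)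
    · have ht : t₀ < t := by linarith
      have hloc : ∀ x, t₀ < x → x < t + 1 →
          (if x < t₁ then w x else ws (x + 1) x) = ws (t + 1) x ∧
          (if x < t₁ then z x else zs (x + 1) x) = zs (t + 1) x := by
        intro x hx hx'
        by_cases hxt : x < t₁
        · simp only [if_pos hxt]
          exact EmSol.unique hμ hθ hq hp
            (fun y hy => hsol y (lt_of_le_of_lt hy.2 hxt)) (hs' hx'.le)
            (fun y hy => (hpos y (lt_of_le_of_lt hy.2 hxt)).le) (hp' hx'.le)
            (hw0 _).symm (hz0 _).symm x (right_mem_Icc.2 hx.le)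
        · simp only [if_neg hxt]
          have hx1 : x ≤ x + 1 := by linarith
          exact EmSol.unique hμ hθ hq hp (hs' hx1) (hs' hx'.le) (hp' hx1) (hp' hx'.le)
            ((hw0 _).trans (hw0 _).symm) ((hz0 _).trans (hz0 _).symm) x (right_mem_Icc.2 hx.le)
      have hev : ∀ᶠ x in 𝓝 t, x ∈ Ioo t₀ (t + 1) := Ioo_mem_nhds ht (by linarith)
      have hd := hs' (x := t) (T := t + 1) (by linarith) t (right_mem_Icc.2 ht.le)
      refine ⟨?_, ?_⟩
      · simp only [if_neg h]
        exact hd.1.congr_of_eventuallyEq (hev.mono fun x hx => (hloc x hx.1 hx.2).1)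
      · simp only [if_neg h]
        exact hd.2.congr_of_eventuallyEq (hev.mono fun x hx => (hloc x hx.1 hx.2).2)
  · exact if_pos ht

/-! ### Change of variables -/

/-- If `u` satisfies the radial equation at `e^t`, then `w(t) = e^{γt} u(e^t)` satisfies the
Emden–Fowler equation at `t`. -/
lemma to_em {γ p q μ θ s : ℝ} (hγp : γ * p = γ + 2 - s) (hθ : θ = 2 + γ - γ * q)
    {u u' : ℝ → ℝ} {u'' t : ℝ} (hpos : 0 < u (exp t))
    (h1 : HasDerivAt u (u' (exp t)) (exp t)) (h2 : HasDerivAt u' u'' (exp t))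
    (heq : u'' + (2 * γ + 1) / exp t * u' (exp t) + exp t ^ (-s) * u (exp t) ^ p
      - μ * u (exp t) ^ q = 0) :
    HasDerivAt (fun t => exp (γ * t) * u (exp t))
      (exp (γ * t) * (γ * u (exp t) + exp t * u' (exp t))) t ∧
    HasDerivAt (fun t => exp (γ * t) * (γ * u (exp t) + exp t * u' (exp t)))
      (emF γ p q μ θ t (exp (γ * t) * u (exp t))) t := by
  have he : HasDerivAt (fun t => exp (γ * t)) (exp (γ * t) * γ) t := by
    simpa using ((hasDerivAt_id t).const_mul γ).exp
  have hu : HasDerivAt (fun t => u (exp t)) (u' (exp t) * exp t) t := h1.comp t (hasDerivAt_exp t)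
  have hu' : HasDerivAt (fun t => u' (exp t)) (u'' * exp t) t := h2.comp t (hasDerivAt_exp t)
  refine ⟨(he.mul hu).congr_deriv (by ring), ?_⟩
  refine (he.mul ((hu.const_mul γ).add ((hasDerivAt_exp t).mul hu'))).congr_deriv ?_
  have hE : exp t ≠ 0 := (exp_pos t).ne'
  have e1 : (exp (γ * t) * u (exp t)) ^ p
      = exp (γ * t) * exp t ^ 2 * (exp t ^ (-s) * u (exp t) ^ p) := by
    rw [mul_rpow (exp_pos _).le hpos.le, ← exp_mul, ← exp_mul, ← exp_nat_mul, ← mul_assoc,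
      ← exp_add, ← exp_add]
    congr 2
    push_cast
    linear_combination t * hγp
  have e2 : exp (θ * t) * (exp (γ * t) * u (exp t)) ^ q
      = exp (γ * t) * exp t ^ 2 * u (exp t) ^ q := by
    rw [mul_rpow (exp_pos _).le hpos.le, ← exp_mul, ← exp_nat_mul, ← mul_assoc,
      ← exp_add, ← exp_add]
    congr 2
    push_cast
    linear_combination t * hθ
  rw [emF, e1, mul_assoc μ, e2]
  simp only [Pi.add_apply, Pi.mul_apply]
  field_simp at heq
  linear_combination exp (γ * t) * exp t * heq

/-- The converse of `to_em`: the function `v(r) = r^{-γ} W(log r)`, its first two derivatives, and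
the radial equation. -/
lemma of_em {γ p q μ θ s : ℝ} (hγp : γ * p = γ + 2 - s) (hθ : θ = 2 + γ - γ * q)
    {W Z : ℝ → ℝ} (hpos : ∀ t, 0 < W t) (hsol : EmSol γ p q μ θ univ W Z) {r : ℝ} (hr : 0 < r) :
    ∃ v' : ℝ → ℝ, ∃ v'' : ℝ,
      (∀ x > 0, HasDerivAt (fun x => exp (-γ * log x) * W (log x)) (v' x) x) ∧
      HasDerivAt v' v'' r ∧
      v'' + (2 * γ + 1) / r * v' r + r ^ (-s) * (exp (-γ * log r) * W (log r)) ^ p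
        - μ * (exp (-γ * log r) * W (log r)) ^ q = 0 := by
  have hlog : ∀ x > 0, HasDerivAt log x⁻¹ x := fun x hx => hasDerivAt_log (ne_of_gt hx)
  have he : ∀ a : ℝ, ∀ x > 0, HasDerivAt (fun x => exp (a * log x))
      (exp (a * log x) * (a * x⁻¹)) x := fun a x hx => ((hlog x hx).const_mul a).exp
  have hW : ∀ x > 0, HasDerivAt (fun x => W (log x)) (Z (log x) * x⁻¹) x := fun x hx =>
    (hsol _ (mem_univ _)).1.comp x (hlog x hx)
  have hZ : ∀ x > 0, HasDerivAt (fun x => Z (log x)) (emF γ p q μ θ (log x) (W (log x)) * x⁻¹) x :=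
    fun x hx => (hsol _ (mem_univ _)).2.comp x (hlog x hx)
  have hsplit : ∀ a : ℝ, ∀ x > 0, exp ((a - 1) * log x) = exp (a * log x) * x⁻¹ := by
    intro a x hx
    rw [sub_one_mul, exp_sub, exp_log hx, div_eq_mul_inv]
  refine ⟨fun x => exp ((-γ - 1) * log x) * (Z (log x) - γ * W (log x)), _, fun x hx => ?_,
    (he _ r hr).mul ((hZ r hr).sub ((hW r hr).const_mul γ)), ?_⟩
  · refine ((he _ x hx).mul (hW x hx)).congr_deriv ?_
    beta_reduce
    rw [hsplit _ x hx]
    ring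
  · have e1 : r ^ (-s) * (exp (-γ * log r) * W (log r)) ^ p
        = exp ((-γ - 2) * log r) * W (log r) ^ p := by
      rw [mul_rpow (exp_pos _).le (hpos _).le, ← exp_mul, rpow_def_of_pos hr, ← mul_assoc,
        ← exp_add]
      congr 2
      linear_combination -log r * hγp
    have e2 : (exp (-γ * log r) * W (log r)) ^ q
        = exp ((-γ - 2) * log r) * (exp (θ * log r) * W (log r) ^ q) := by
      rw [mul_rpow (exp_pos _).le (hpos _).le, ← exp_mul, ← mul_assoc, ← exp_add]
      congr 2
      linear_combination -log r * hθ
    have e3 : exp ((-γ - 2) * log r) = exp ((-γ - 1) * log r) * r⁻¹ := by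
      rw [← hsplit _ r hr]; congr 1; ring
    rw [e1, e2, e3, emF]
    field_simp
    ring

lemma EmSol.contDiff {γ p q μ θ : ℝ} {W Z : ℝ → ℝ} (hpos : ∀ t, 0 < W t)
    (hsol : EmSol γ p q μ θ univ W Z) : ContDiff ℝ 2 W := by
  have hW : ∀ t, HasDerivAt W (Z t) t := fun t => (hsol t (mem_univ t)).1
  have hZ : ∀ t, HasDerivAt Z (emF γ p q μ θ t (W t)) t := fun t => (hsol t (mem_univ t)).2
  have hWc : Continuous W := continuous_iff_continuousAt.2 fun t => (hW t).continuousAt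
  have hdW : deriv W = Z := funext fun t => (hW t).deriv
  have hdZ : deriv Z = fun t => emF γ p q μ θ t (W t) := funext fun t => (hZ t).deriv
  have h1 : ContDiff ℝ 1 Z := by
    refine contDiff_one_iff_deriv.2 ⟨fun t => (hZ t).differentiableAt, ?_⟩
    rw [hdZ]
    unfold emF
    have hr : ∀ a : ℝ, Continuous fun t => W t ^ a :=
      fun a => hWc.rpow_const fun t => Or.inl (hpos t).ne'
    have := hr p
    have := hr q
    fun_prop
  rw [show (2 : WithTop ℕ∞) = 1 + 1 by norm_num, contDiff_succ_iff_deriv]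
  exact ⟨fun t => (hW t).differentiableAt, by simp, hdW ▸ h1⟩

theorem stmt7 (n : ℕ) (hn : 3 ≤ n) (s μ q : ℝ) (hs0 : 0 < s) (hs2 : s < 2)
    (hμ : 0 < μ) (hq1 : 1 < q) (hq2 : q < twoStarS n s - 1)
    (R : ℝ) (hR : 0 < R) (u : ℝ → ℝ)
    (hu : IsRadialSol n s μ q (Set.Ioo 0 R) u)
    (hbd : UpliBound n u) :
    ∃ v : ℝ → ℝ, IsRadialSol n s μ q (Set.Ioi 0) v ∧
      Set.EqOn v u (Set.Ioo 0 R) := by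
  obtain ⟨hC2, hupos, hueq⟩ := hu
  have hn3 : (3 : ℝ) ≤ n := by exact_mod_cast hn
  have hn2 : (n : ℝ) - 2 ≠ 0 := by linarith
  set p := twoStarS n s - 1 with hp
  set γ := ((n : ℝ) - 2) / 2 with hγ
  have hγ0 : 0 < γ := by rw [hγ]; linarith
  have hγp : γ * p = γ + 2 - s := by
    rw [hp, hγ, twoStarS]; field_simp; ring
  obtain ⟨θ, hθ⟩ : ∃ θ, θ = 2 + γ - γ * q := ⟨_, rfl⟩
  have hθ0 : 0 < θ := by
    have := mul_lt_mul_of_pos_left hq2 hγ0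
    linarith
  have hn1 : (n : ℝ) - 1 = 2 * γ + 1 := by rw [hγ]; ring
  -- the derivatives of `u`
  have hdiff : ∀ r ∈ Ioo 0 R, HasDerivAt u (deriv u r) r ∧
      HasDerivAt (deriv u) (deriv (deriv u) r) r := by
    rw [show (2 : WithTop ℕ∞) = 1 + 1 by norm_num, contDiffOn_succ_iff_deriv_of_isOpen isOpen_Ioo]
      at hC2
    intro r hr
    have hnhds := isOpen_Ioo.mem_nhds hr
    exact ⟨((hC2.1 r hr).differentiableAt hnhds).hasDerivAt,
      (((hC2.2.2.differentiableOn (by norm_num)) r hr).differentiableAt hnhds).hasDerivAt⟩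
  have hmem : ∀ t < log R, exp t ∈ Ioo 0 R := fun t ht =>
    ⟨exp_pos t, (lt_log_iff_exp_lt hR).1 ht⟩
  have hsol : EmSol γ p q μ θ (Iio (log R)) (fun t => exp (γ * t) * u (exp t))
      (fun t => exp (γ * t) * (γ * u (exp t) + exp t * deriv u (exp t))) := by
    intro t ht
    have hm := hmem t ht
    have heq := hueq _ hm
    rw [radialEq, hn1] at heq
    exact to_em hγp hθ (hupos _ hm) (hdiff _ hm).1 (hdiff _ hm).2 heq
  -- boundedness near `-∞`
  obtain ⟨T₀, M, hM⟩ : ∃ T₀ M : ℝ, ∀ t ≤ T₀, exp (γ * t) * u (exp t) ≤ M := by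
    obtain ⟨B, hB, hBtop⟩ := exists_between hbd
    have hev := Filter.eventually_lt_of_limsup_lt hB
    obtain ⟨δ, hδ, hδ'⟩ := mem_nhdsGT_iff_exists_Ioc_subset.1 hev
    refine ⟨log δ, B.toReal, fun t ht => ?_⟩
    have h1 := hδ' (show exp t ∈ Ioc 0 δ from ⟨exp_pos t, (le_log_iff_exp_le hδ).1 ht⟩)
    have h2 : ENNReal.ofReal (exp t ^ γ * u (exp t)) < B := h1
    rw [← exp_mul, mul_comm t γ] at h2
    exact (ENNReal.ofReal_le_iff_le_toReal hBtop.ne).1 h2.le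
  obtain ⟨W, Z, hWpos, hWsol, hWeq⟩ := em_extend hμ hθ0 hq1 hq2 hsol
    (fun t ht => mul_pos (exp_pos _) (hupos _ (hmem t ht))) hM
  refine ⟨fun r => exp (-γ * log r) * W (log r), ⟨?_, fun r _ => mul_pos (exp_pos _) (hWpos _),
    fun r hr => ?_⟩, fun r hr => ?_⟩
  · have hl : ContDiffOn ℝ 2 log (Ioi 0) := contDiffOn_log.mono fun x hx => ne_of_gt hx
    exact (contDiffOn_const.mul hl).exp.mul ((hWsol.contDiff hWpos).comp_contDiffOn hl)
  · obtain ⟨v', v'', h1, h2, h3⟩ := of_em hγp hθ hWpos hWsol hr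
    have hev : deriv (fun r => exp (-γ * log r) * W (log r)) =ᶠ[𝓝 r] v' := by
      filter_upwards [Ioi_mem_nhds hr] with x hx using (h1 x hx).deriv
    rw [radialEq, hev.deriv_eq, hev.eq_of_nhds, h2.deriv, hn1]
    exact h3
  · have hl : log r < log R := log_lt_log hr.1 hr.2
    simp only [hWeq _ hl, exp_log hr.1]
    rw [← mul_assoc, ← exp_add]
    simp
end
end

section
/- Let q = 2*(s) − 1. Every positive radial solution u of (E) on some (0,R), R > 0, satisfying limsup_{r→0⁺} r^{(n−2)/2} u(r) < ∞, extends to a positive radial solution of (E) on (0, μ^{−1/s}); that is, there exists a positive radial solution ũ of (E) on (0, μ^{−1/s}) with ũ = u on (0, min(R, μ^{−1/s})). -/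
/-!
Write `a = (n - 2) / 2`. In the Emden–Fowler variables `r = exp t`, `x t = r ^ a * u r`, equation (E)
with `q = 2*(s) - 1` becomes `x'' = a² x - (1 - μ exp (s t)) x ^ q`. With `y = x'`, the Pohozaev
energy `y² / 2 - a² x² / 2 + (1 - μ exp (s t)) x ^ (q + 1) / (q + 1)` is strictly decreasing in `t`,
since the only explicit dependence on time is through the decreasing factor `1 - μ exp (s t)`.

The upper bound at the origin says that `x` is bounded as `t → -∞`, and this forces the energy to be
nonpositive (`efEnergy_nonpos`): if it were at least `ε > 0` on a left half-line, then `x'' ≤ -ε / M`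
wherever `|x'| ≤ √ε`, so that `x'` crosses the strip `[-√ε, √ε]` once, downwards, in bounded time;
but a bounded function on a half-line has slow points arbitrarily far to the left.

By strict monotonicity the energy is then negative from some time on. As long as
`1 - μ exp (s t) ≥ 0`, that is, as long as `r ≤ μ ^ (-1 / s)`, negative energy keeps `x` away from
zero and gives `|x'| ≤ a x`, whence exponential bounds (`apriori`). The vector field can therefore be
truncated outside a box to a bounded, globally Lipschitz one, for which Picard–Lindelöf gives a
solution up to the time `log (μ ^ (-1 / s))` in one step. The a priori bounds show that this solution
never leaves the box, and uniqueness that it agrees with the given one where both are defined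
(`exists_extension`).
-/

open Filter Set Real
open scoped Topology ENNReal

noncomputable section

/-! ### The Emden–Fowler system and its energy -/

/-- The energy of the Emden–Fowler system at time `t`, for a position `x` and a velocity `y`. For
`x t = r ^ a * u r` with `r = exp t` it is the radial Pohozaev functional of `u`. -/
def efEnergy (a q μ s : ℝ) (x y : ℝ → ℝ) (t : ℝ) : ℝ :=
  y t ^ 2 / 2 - a ^ 2 * x t ^ 2 / 2 + (1 - μ * exp (s * t)) * x t ^ (q + 1) / (q + 1)

/-- At time `t`, the pair `(x, y)` solves the first-order form
`x' = y`, `y' = a² x - (1 - μ exp (s t)) x ^ q` of the Emden–Fowler equation, with `x t > 0`. -/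
def EFAt (a q μ s : ℝ) (x y : ℝ → ℝ) (t : ℝ) : Prop :=
  HasDerivAt x (y t) t ∧
    HasDerivAt y (a ^ 2 * x t - (1 - μ * exp (s * t)) * x t ^ q) t ∧ 0 < x t

lemma hasDerivAt_efEnergy {a q μ s t : ℝ} {x y : ℝ → ℝ} (hq : 1 < q)
    (h : EFAt a q μ s x y t) :
    HasDerivAt (efEnergy a q μ s x y)
      (-(μ * s * exp (s * t) * x t ^ (q + 1) / (q + 1))) t := by
  obtain ⟨hx, hy, h0⟩ := h
  have h1 : HasDerivAt (fun t => exp (s * t)) (exp (s * t) * (s * 1)) t :=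
    ((hasDerivAt_id t).const_mul s).exp
  have h2 := hx.rpow_const (p := q + 1) (Or.inl h0.ne')
  have h3 := (((hy.pow 2).div_const 2).sub (((hx.pow 2).const_mul (a ^ 2)).div_const 2)).add
    ((((h1.const_mul μ).const_sub 1).mul h2).div_const (q + 1))
  refine h3.congr_deriv ?_
  have : q + 1 ≠ 0 := by linarith
  rw [show q + 1 - 1 = q by ring]
  simp
  field_simp
  ring

/-- The set `D` need not be open: the system is only required in its interior, so that intervals
with end points are covered as well. -/
lemma strictAntiOn_efEnergy {a q μ s : ℝ} {x y : ℝ → ℝ} {D : Set ℝ} (hD : Convex ℝ D)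
    (hq : 1 < q) (hμ : 0 < μ) (hs : 0 < s) (hx : ContinuousOn x D) (hy : ContinuousOn y D)
    (h : ∀ t ∈ interior D, EFAt a q μ s x y t) :
    StrictAntiOn (efEnergy a q μ s x y) D := by
  refine strictAntiOn_of_deriv_neg hD ?_ fun t ht => ?_
  · have : ContinuousOn (fun t => x t ^ (q + 1)) D :=
      hx.rpow_const fun _ _ => Or.inr (by linarith)
    have h3 : ContinuousOn (fun t : ℝ => 1 - μ * exp (s * t)) D := by fun_prop
    unfold efEnergy
    exact (((hy.pow 2).div_const 2).sub ((continuousOn_const.mul (hx.pow 2)).div_const 2)).add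
      ((h3.mul this).div_const _)
  · rw [(hasDerivAt_efEnergy hq (h t ht)).deriv]
    have := Real.rpow_pos_of_pos (h t ht).2.2 (q + 1)
    have hq1 : 0 < q + 1 := by linarith
    have := exp_pos (s * t)
    rw [neg_lt_zero]
    positivity

/-- If the derivative of `y` is negative whenever `y` takes the value `g`, then `y` cannot cross the
level `g` upwards. -/
lemma le_of_deriv_neg_at {y y' : ℝ → ℝ} {c d g : ℝ}
    (hy : ∀ t ∈ Icc c d, HasDerivAt y (y' t) t) (hb : ∀ t ∈ Icc c d, y t = g → y' t < 0)
    (hc : y c ≤ g) : ∀ t ∈ Icc c d, y t ≤ g := by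
  have := image_le_of_deriv_right_lt_deriv_boundary' (f := y) (f' := y') (a := c) (b := d)
    (B := fun _ => g) (B' := fun _ => 0)
    (fun t ht => (hy t ht).continuousAt.continuousWithinAt)
    (fun t ht => (hy t (Ico_subset_Icc_self ht)).hasDerivWithinAt) hc continuousOn_const
    (fun t _ => hasDerivWithinAt_const _ _ _) (fun t ht => hb t (Ico_subset_Icc_self ht))
  exact fun t ht => this ht

/-- A positive solution on a left half-line that is bounded near `-∞` has nonpositive energy. -/
lemma efEnergy_nonpos {a q μ s b M t₀ : ℝ} {x y : ℝ → ℝ} (hq : 1 < q) (hμ : 0 < μ) (hs : 0 < s)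
    (h : ∀ t < b, EFAt a q μ s x y t) (hM : ∀ t < t₀, x t ≤ M) {t₁ : ℝ} (ht₁ : t₁ < b) :
    efEnergy a q μ s x y t₁ ≤ 0 := by
  by_contra! hpos
  set ε := efEnergy a q μ s x y t₁ with hε
  have hanti : StrictAntiOn (efEnergy a q μ s x y) (Iio b) :=
    strictAntiOn_efEnergy (convex_Iio b) hq hμ hs
      (fun t ht => (h t ht).1.continuousAt.continuousWithinAt)
      (fun t ht => (h t ht).2.1.continuousAt.continuousWithinAt)
      (fun t ht => h t (interior_subset (s := Iio b) ht))
  set t₂ := min t₁ (t₀ - 1) with ht₂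
  have h21 : t₂ ≤ t₁ := min_le_left _ _
  have h20 : t₂ < t₀ := (min_le_right _ _).trans_lt (by linarith)
  have hlt : ∀ t ≤ t₂, t < b := fun t ht => by linarith
  have hxM : ∀ t ≤ t₂, x t ≤ M := fun t ht => hM t (by linarith)
  have hE : ∀ t ≤ t₂, ε ≤ efEnergy a q μ s x y t := fun t ht =>
    hanti.antitoneOn (hlt t ht) ht₁ (ht.trans h21)
  have hMpos : 0 < M := (h t₂ (hlt _ le_rfl)).2.2.trans_le (hxM _ le_rfl)
  -- where the speed is small, the acceleration is at most `-ε / M`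
  have hacc : ∀ t ≤ t₂, y t ^ 2 ≤ ε →
      a ^ 2 * x t - (1 - μ * exp (s * t)) * x t ^ q ≤ -(ε / M) := by
    intro t ht hy
    have h1 := hE t ht
    have h0 := (h t (hlt t ht)).2.2
    unfold efEnergy at h1
    rw [rpow_add_one h0.ne'] at h1
    set A := (1 - μ * exp (s * t)) * x t ^ q with hA
    have hq1 : 0 < q + 1 := by linarith
    rw [← mul_assoc, ← hA] at h1
    have h2 : ε + a ^ 2 * x t ^ 2 ≤ 2 * (A * x t / (q + 1)) := by linarith
    have h3 : 2 * (A * x t / (q + 1)) ≤ A * x t := by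
      have : 0 ≤ A * x t := by
        have : 0 ≤ A * x t / (q + 1) := by nlinarith [sq_nonneg (a * x t)]
        have := mul_nonneg this hq1.le
        rwa [div_mul_cancel₀ _ hq1.ne'] at this
      rw [← mul_div_assoc, div_le_iff₀ hq1]
      nlinarith
    have h4 : (a ^ 2 * x t - A) * x t ≤ -ε := by nlinarith
    have h5 : ε / M ≤ ε / x t := div_le_div_of_nonneg_left hpos.le h0 (hxM t ht)
    have h6 : a ^ 2 * x t - A ≤ -ε / x t := by rwa [le_div_iff₀ h0]
    rw [neg_div] at h6
    linarith
  set g := sqrt ε with hg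
  have hgpos : 0 < g := sqrt_pos.2 hpos
  have hg2 : g ^ 2 = ε := sq_sqrt hpos.le
  set δ := ε / M with hδ
  have hδpos : 0 < δ := by positivity
  -- slow times exist in every sufficiently long interval
  have hslow : ∀ c ≤ t₂, ∃ τ ∈ Ioo (c - 2 * M / g) c, |y τ| < g := by
    intro c hc
    have hN : 0 < 2 * M / g := by positivity
    obtain ⟨τ, hτ, he⟩ := exists_hasDerivAt_eq_slope x y (a := c - 2 * M / g) (b := c)
      (by linarith)
      (fun t ht => (h t (hlt t (ht.2.trans hc))).1.continuousAt.continuousWithinAt)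
      (fun t ht => (h t (hlt t (ht.2.le.trans hc))).1)
    refine ⟨τ, hτ, ?_⟩
    have e1 : c - (c - 2 * M / g) = 2 * M / g := by ring
    rw [he, e1, abs_div, abs_of_pos hN, div_lt_iff₀ hN]
    have e2 : g * (2 * M / g) = 2 * M := by field_simp
    rw [e2, abs_lt]
    have i1 := hxM c hc
    have i2 := hxM (c - 2 * M / g) (by linarith)
    have i3 := (h c (hlt c hc)).2.2
    have i4 := (h (c - 2 * M / g) (hlt _ (by linarith))).2.2
    constructor <;> linarith
  -- two slow times `τ₂ < τ₁` further apart than `2 * g / δ`, the longest time which `y` can spend in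
  -- `[-g, g]` when it decreases there with slope at most `-δ`
  obtain ⟨τ₁, hτ₁, hy₁⟩ := hslow t₂ le_rfl
  obtain ⟨τ₂, hτ₂, hy₂⟩ := hslow (t₂ - 2 * M / g - 2 * g / δ)
    (by have : 0 < 2 * M / g + 2 * g / δ := by positivity
        linarith)
  have hlen : 2 * g / δ < τ₁ - τ₂ := by linarith [hτ₁.1, hτ₂.2]
  have h12 : τ₂ < τ₁ := by
    have : 0 < 2 * g / δ := by positivity
    linarith
  rw [abs_lt] at hy₁ hy₂
  have hD : ∀ t ≤ τ₁, HasDerivAt y (a ^ 2 * x t - (1 - μ * exp (s * t)) * x t ^ q) t :=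
    fun t ht => (h t (hlt t (ht.trans hτ₁.2.le))).2.1
  -- both levels `g` and `-g` can only be crossed downwards, so `y` stays in `[-g, g]` in between
  have hup : ∀ t ∈ Icc τ₂ τ₁, y t ≤ g :=
    le_of_deriv_neg_at (fun t ht => hD t ht.2)
      (fun t ht he => (hacc t (ht.2.trans hτ₁.2.le) (by rw [he, hg2])).trans_lt (by linarith))
      hy₂.2.le
  have hlow : ∀ t ∈ Icc τ₂ τ₁, -g ≤ y t := by
    intro t ht
    by_contra! hlt'
    have := le_of_deriv_neg_at (y := y) (c := t) (d := τ₁) (g := -g) (fun t ht => hD t ht.2)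
      (fun t ht he => (hacc t (ht.2.trans hτ₁.2.le) (by rw [he, neg_sq, hg2])).trans_lt
        (by linarith)) hlt'.le τ₁ ⟨ht.2, le_rfl⟩
    linarith
  have hfin := (convex_Icc τ₂ τ₁).image_sub_le_mul_sub_of_deriv_le (f := y) (C := -δ)
    (fun t ht => (hD t ht.2).continuousAt.continuousWithinAt)
    (fun t ht => (hD t (interior_subset ht).2).differentiableAt.differentiableWithinAt)
    (fun t ht => by
      have ht' := interior_subset ht
      rw [(hD t ht'.2).deriv]
      refine hacc t (ht'.2.trans hτ₁.2.le) ?_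
      rw [← hg2]
      exact sq_le_sq' (hlow t ht') (hup t ht'))
    τ₂ ⟨le_rfl, h12.le⟩ τ₁ ⟨h12.le, le_rfl⟩ h12.le
  have : 2 * g < (τ₁ - τ₂) * δ := by rwa [div_lt_iff₀ hδpos] at hlen
  nlinarith

/-- A solution with negative energy on `[t₀, b]` stays in a box which does not depend on `b`, as long
as `b ≤ T` and the coefficient `1 - μ exp (s t)` is nonnegative up to time `T`. The upper bounds
follow from `|y| ≤ a x`, which makes `x t * exp (-a t)` nonincreasing. -/
lemma apriori_s8 {a q μ s b T t₀ ε : ℝ} {x y : ℝ → ℝ} (ha : 0 < a) (hq : 1 < q)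
    (hμ : 0 < μ) (hs : 0 < s) (hε : 0 < ε)
    (hx : ContinuousOn x (Icc t₀ b)) (hy : ContinuousOn y (Icc t₀ b))
    (h : ∀ t ∈ Ioo t₀ b, EFAt a q μ s x y t) (h0 : ∀ t ∈ Icc t₀ b, 0 < x t)
    (hbT : b ≤ T) (hb : ∀ t ≤ T, μ * exp (s * t) ≤ 1)
    (hE : efEnergy a q μ s x y t₀ ≤ -ε) :
    ∀ t ∈ Icc t₀ b, sqrt (2 * ε) / a ≤ x t ∧ x t ≤ x t₀ * exp (a * (T - t₀)) ∧
      |y t| ≤ a * (x t₀ * exp (a * (T - t₀))) := by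
  have hanti : AntitoneOn (efEnergy a q μ s x y) (Icc t₀ b) :=
    (strictAntiOn_efEnergy (convex_Icc _ _) hq hμ hs hx hy
      (by rwa [interior_Icc])).antitoneOn
  have key : ∀ t ∈ Icc t₀ b, y t ^ 2 + 2 * ε ≤ (a * x t) ^ 2 := by
    intro t ht
    have h1 := hanti ⟨le_rfl, ht.1.trans ht.2⟩ ht ht.1
    have h2 : efEnergy a q μ s x y t ≤ -ε := h1.trans hE
    have h3 : 0 ≤ (1 - μ * exp (s * t)) * x t ^ (q + 1) / (q + 1) :=
      div_nonneg (mul_nonneg (by linarith [hb t (ht.2.trans hbT)]) (rpow_nonneg (h0 t ht).le _))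
        (by linarith)
    unfold efEnergy at h2
    nlinarith
  have hyx : ∀ t ∈ Icc t₀ b, |y t| ≤ a * x t := fun t ht =>
    abs_le_of_sq_le_sq (by linarith [key t ht]) (mul_pos ha (h0 t ht)).le
  have hxe : ∀ t ∈ Icc t₀ b, x t ≤ x t₀ * exp (a * (T - t₀)) := by
    have : AntitoneOn (fun t => x t * exp (-a * t)) (Icc t₀ b) := by
      have hd : ∀ t ∈ Ioo t₀ b, HasDerivAt (fun t => x t * exp (-a * t))
          (y t * exp (-a * t) + x t * (exp (-a * t) * (-a * 1))) t := fun t ht =>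
        (h t ht).1.mul (((hasDerivAt_id t).const_mul (-a)).exp)
      refine antitoneOn_of_deriv_nonpos (convex_Icc _ _) (hx.mul (by fun_prop)) ?_ ?_
      · rw [interior_Icc]
        exact fun t ht => (hd t ht).differentiableAt.differentiableWithinAt
      · rw [interior_Icc]
        intro t ht
        rw [(hd t ht).deriv]
        have := (le_abs_self _).trans (hyx t (Ioo_subset_Icc_self ht))
        nlinarith [exp_pos (-a * t)]
    intro t ht
    have h1 : x t * exp (-a * t) ≤ x t₀ * exp (-a * t₀) :=
      this ⟨le_rfl, ht.1.trans ht.2⟩ ht ht.1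
    have h2 : x t = x t * exp (-a * t) * exp (a * t) := by
      rw [mul_assoc, ← exp_add]; simp
    rw [h2]
    calc _ ≤ x t₀ * exp (-a * t₀) * exp (a * t) := by gcongr
      _ = x t₀ * exp (a * (t - t₀)) := by rw [mul_assoc, ← exp_add]; ring_nf
      _ ≤ _ := by
        have := h0 t₀ ⟨le_rfl, ht.1.trans ht.2⟩
        have := ht.2.trans hbT
        gcongr
  intro t ht
  refine ⟨?_, hxe t ht, (hyx t ht).trans ?_⟩
  · rw [div_le_iff₀ ha, mul_comm (x t)]
    exact Real.sqrt_le_iff.2 ⟨(mul_pos ha (h0 t ht)).le, by nlinarith [key t ht, sq_nonneg (y t)]⟩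
  · have := hxe t ht
    gcongr

/-! ### Extension by truncation -/

/-- The Emden–Fowler vector field on the phase plane, with the position clamped to `[m, M]` and the
velocity clamped to `[-Y, Y]`. For `0 < m` it is bounded and globally Lipschitz. -/
def truncField (a q μ s m M Y t : ℝ) (p : ℝ × ℝ) : ℝ × ℝ :=
  (max (-Y) (min Y p.2),
    a ^ 2 * max m (min M p.1) - (1 - μ * exp (s * t)) * max m (min M p.1) ^ q)

lemma truncField_eq {a q μ s m M Y t : ℝ} {p : ℝ × ℝ} (h1 : m ≤ p.1) (h2 : p.1 ≤ M)
    (h3 : |p.2| ≤ Y) :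
    truncField a q μ s m M Y t p = (p.2, a ^ 2 * p.1 - (1 - μ * exp (s * t)) * p.1 ^ q) := by
  rw [abs_le] at h3
  simp [truncField, min_eq_right h2, max_eq_right h1, min_eq_right h3.2, max_eq_right h3.1]

lemma clamp_mem_s8 {m M z : ℝ} (h : m ≤ M) : max m (min M z) ∈ Icc m M :=
  ⟨le_max_left _ _, max_le h (min_le_left _ _)⟩

lemma truncField_lipschitz {a q μ s m M Y T : ℝ} (hμ : 0 < μ) (hm : 0 < m) (hmM : m ≤ M)
    (hT : ∀ t ≤ T, μ * exp (s * t) ≤ 1) :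
    ∃ K, ∀ t ≤ T, LipschitzWith K (truncField a q μ s m M Y t) := by
  obtain ⟨C, hC⟩ : ∃ C, LipschitzOnWith C (fun z : ℝ => z ^ q) (Icc m M) := by
    refine ContDiffOn.exists_lipschitzOnWith (n := 1) ?_ one_ne_zero (convex_Icc _ _) isCompact_Icc
    exact fun z hz => (contDiffAt_rpow_const (Or.inl (hm.trans_le hz.1).ne')).contDiffWithinAt
  have hcl : ∀ m M : ℝ, LipschitzWith 1 (fun z : ℝ => max m (min M z)) := fun m M =>
    (LipschitzWith.id.const_min M).const_max m
  refine ⟨max 1 ⟨a ^ 2 + C, by positivity⟩, fun t ht => LipschitzWith.prodMk ?_ ?_⟩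
  · have := (hcl (-Y) Y).comp (LipschitzWith.prod_snd (α := ℝ) (β := ℝ))
    rwa [one_mul] at this
  · refine LipschitzWith.of_dist_le_mul fun p p' => ?_
    have h1 : dist (max m (min M p.1)) (max m (min M p'.1)) ≤ dist p p' := by
      simpa using ((hcl m M).comp LipschitzWith.prod_fst).dist_le_mul p p'
    have h2 := hC.dist_le_mul _ (clamp_mem_s8 (z := p.1) hmM) _ (clamp_mem_s8 (z := p'.1) hmM)
    have hk0 := hT t ht
    have hk1 : 0 < μ * exp (s * t) := by positivity
    have hk : |1 - μ * exp (s * t)| ≤ 1 := by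
      rw [abs_le]; constructor <;> linarith
    set X := max m (min M p.1)
    set X' := max m (min M p'.1)
    simp only [Real.dist_eq] at h1 h2 ⊢
    have e : a ^ 2 * X - (1 - μ * exp (s * t)) * X ^ q
        - (a ^ 2 * X' - (1 - μ * exp (s * t)) * X' ^ q)
        = a ^ 2 * (X - X') - (1 - μ * exp (s * t)) * (X ^ q - X' ^ q) := by ring
    rw [e]
    calc _ ≤ |a ^ 2 * (X - X')| + |(1 - μ * exp (s * t)) * (X ^ q - X' ^ q)| := abs_sub _ _
      _ = a ^ 2 * |X - X'| + |1 - μ * exp (s * t)| * |X ^ q - X' ^ q| := by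
        rw [abs_mul, abs_mul, abs_of_nonneg (sq_nonneg a)]
      _ ≤ a ^ 2 * dist p p' + 1 * (C * dist p p') := by
        gcongr
        exact h2.trans (by gcongr)
      _ = (a ^ 2 + C) * dist p p' := by ring

/-- The truncated field is bounded on the whole plane, so the ball in the Picard–Lindelöf theorem can
be taken large enough to reach time `T` in one step. -/
lemma exists_trunc_solution {a q μ s m M Y t₀ T : ℝ} (hq : 1 < q) (hμ : 0 < μ) (hm : 0 < m)
    (hmM : m ≤ M) (hY : 0 ≤ Y) (ht : t₀ ≤ T) (hT : ∀ t ≤ T, μ * exp (s * t) ≤ 1) (p : ℝ × ℝ) :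
    ∃ α : ℝ → ℝ × ℝ, α t₀ = p ∧ ∀ t ∈ Icc t₀ T,
      HasDerivWithinAt α (truncField a q μ s m M Y t (α t)) (Icc t₀ T) t := by
  obtain ⟨K, hK⟩ := truncField_lipschitz (a := a) (q := q) (Y := Y) hμ hm hmM hT
  have hM : 0 < M := hm.trans_le hmM
  set L : NNReal := ⟨max Y (a ^ 2 * M + M ^ q), le_max_of_le_left hY⟩ with hL
  have hpl : IsPicardLindelof (truncField a q μ s m M Y) (tmin := t₀) (tmax := T)
      ⟨t₀, le_rfl, ht⟩ p (L * ⟨T - t₀, sub_nonneg.2 ht⟩) 0 L K := by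
    refine ⟨fun t h => (hK t h.2).lipschitzOnWith, fun z _ => ?_, fun t h z _ => ?_, ?_⟩
    · unfold truncField
      fun_prop
    · have hc := clamp_mem_s8 (z := z.1) hmM
      have hk0 := hT t h.2
      have hk1 : 0 < μ * exp (s * t) := by positivity
      have hX0 := hm.trans_le hc.1
      have h1 : max m (min M z.1) ^ q ≤ M ^ q := by
        gcongr
        exact hc.2
      have h2 : 0 ≤ max m (min M z.1) ^ q := by positivity
      change max |_| |_| ≤ max Y (a ^ 2 * M + M ^ q)
      refine max_le_max (abs_le.2 ⟨le_max_left _ _, max_le (by linarith) (min_le_left _ _)⟩) ?_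
      have h3 : a ^ 2 * max m (min M z.1) ≤ a ^ 2 * M := by
        gcongr
        exact hc.2
      have h4 : 0 ≤ a ^ 2 * max m (min M z.1) := by positivity
      have h5 : 0 ≤ (1 - μ * exp (s * t)) * max m (min M z.1) ^ q :=
        mul_nonneg (by linarith) h2
      have h6 : (1 - μ * exp (s * t)) * max m (min M z.1) ^ q ≤ max m (min M z.1) ^ q :=
        mul_le_of_le_one_left h2 (by linarith)
      simp only [truncField]
      rw [abs_le]
      constructor <;> linarith
    · simp only [sub_self, NNReal.coe_zero, sub_zero]
      rw [max_eq_left (sub_nonneg.2 ht)]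
      exact le_rfl
  obtain ⟨α, h1, h2⟩ := hpl.exists_eq_forall_mem_Icc_hasDerivWithinAt₀
  exact ⟨α, h1, h2⟩

lemma HasDerivAt.prod_components {α : ℝ → ℝ × ℝ} {v : ℝ × ℝ} {t : ℝ} (h : HasDerivAt α v t) :
    HasDerivAt (fun t => (α t).1) v.1 t ∧ HasDerivAt (fun t => (α t).2) v.2 t :=
  ⟨(hasFDerivAt_fst (𝕜 := ℝ) (p := α t)).comp_hasDerivAt t h,
    (hasFDerivAt_snd (𝕜 := ℝ) (p := α t)).comp_hasDerivAt t h⟩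

/-- A solution on `[t₀, b)` with negative energy at `t₀` extends to `(t₀, T)`, provided the
coefficient `1 - μ exp (s t)` is nonnegative up to time `T`. -/
lemma exists_extension {a q μ s b T t₀ ε : ℝ} {x y : ℝ → ℝ} (ha : 0 < a) (hq : 1 < q)
    (hμ : 0 < μ) (hs : 0 < s) (hε : 0 < ε) (hb : t₀ < b) (hbT : b ≤ T)
    (hT : ∀ t ≤ T, μ * exp (s * t) ≤ 1)
    (h : ∀ t ∈ Ico t₀ b, EFAt a q μ s x y t)
    (hE : efEnergy a q μ s x y t₀ ≤ -ε) :
    ∃ X Y : ℝ → ℝ, (∀ t ∈ Ioo t₀ T, EFAt a q μ s X Y t) ∧ ∀ t ∈ Ioo t₀ b, X t = x t := by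
  set m := sqrt (2 * ε) / a with hm
  have hm0 : 0 < m := by positivity
  set M := x t₀ * exp (a * (T - t₀)) with hM
  have ht₀ : t₀ ≤ T := hb.le.trans hbT
  have hbox : ∀ c < b, ∀ t ∈ Icc t₀ c, m ≤ x t ∧ x t ≤ M ∧ |y t| ≤ a * M := by
    intro c hc
    have hsub : ∀ t ∈ Icc t₀ c, t ∈ Ico t₀ b := fun t ht => ⟨ht.1, ht.2.trans_lt hc⟩
    exact apriori_s8 ha hq hμ hs hε
      (fun t ht => (h t (hsub t ht)).1.continuousAt.continuousWithinAt)
      (fun t ht => (h t (hsub t ht)).2.1.continuousAt.continuousWithinAt)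
      (fun t ht => h t (hsub t (Ioo_subset_Icc_self ht)))
      (fun t ht => (h t (hsub t ht)).2.2) (hc.le.trans hbT) hT hE
  obtain ⟨i1, i2, i3⟩ := hbox t₀ hb t₀ ⟨le_rfl, le_rfl⟩
  have hmM : m ≤ M := i1.trans i2
  have haM : 0 < a * M := mul_pos ha (hm0.trans_le hmM)
  -- the truncation box is strictly larger than the box of the a priori bounds
  obtain ⟨α, hα0, hα⟩ := exists_trunc_solution (a := a) (m := m / 2) (M := M + 1) (Y := a * M + 1)
    hq hμ (by linarith) (by linarith) (by linarith) ht₀ hT (x t₀, y t₀)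
  have hαc : ContinuousOn α (Icc t₀ T) := fun t ht => (hα t ht).continuousWithinAt
  set X : ℝ → ℝ := fun t => (α t).1 with hX
  set Y : ℝ → ℝ := fun t => (α t).2 with hY
  have hXc : ContinuousOn X (Icc t₀ T) := continuous_fst.comp_continuousOn hαc
  have hYc : ContinuousOn Y (Icc t₀ T) := continuous_snd.comp_continuousOn hαc
  have hX0 : X t₀ = x t₀ := by simp [hX, hα0]
  have hY0 : Y t₀ = y t₀ := by simp [hY, hα0]
  have hEF : ∀ t ∈ Ioo t₀ T, m / 2 ≤ X t → X t ≤ M + 1 → |Y t| ≤ a * M + 1 →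
      EFAt a q μ s X Y t := by
    intro t ht h1 h2 h3
    have hd := (hα t (Ioo_subset_Icc_self ht)).hasDerivAt (Icc_mem_nhds ht.1 ht.2)
    rw [truncField_eq h1 h2 h3] at hd
    obtain ⟨d1, d2⟩ := hd.prod_components
    exact ⟨d1, d2, by linarith⟩
  have hgood : ∀ t ∈ Icc t₀ T, m / 2 < X t ∧ X t < M + 1 ∧ |Y t| < a * M + 1 := by
    -- at the first time `c` when the larger box is left, the a priori bounds on `[t₀, c]` still hold
    by_contra hbad
    push Not at hbad
    set B : Set ℝ := {t ∈ Icc t₀ T | X t ≤ m / 2} ∪ ({t ∈ Icc t₀ T | M + 1 ≤ X t} ∪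
      {t ∈ Icc t₀ T | a * M + 1 ≤ |Y t|}) with hB
    have hBsub : B ⊆ Icc t₀ T := by
      rintro t (ht | ht | ht) <;> exact ht.1
    have hBc : IsClosed B :=
      (isClosed_Icc.isClosed_le hXc continuousOn_const).union
        ((isClosed_Icc.isClosed_le continuousOn_const hXc).union
          (isClosed_Icc.isClosed_le continuousOn_const hYc.abs))
    have hBk : IsCompact B := isCompact_Icc.of_isClosed_subset hBc hBsub
    have hBne : B.Nonempty := by
      obtain ⟨t, ht, hh⟩ := hbad
      refine ⟨t, ?_⟩
      by_cases c1 : X t ≤ m / 2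
      · exact Or.inl ⟨ht, c1⟩
      by_cases c2 : M + 1 ≤ X t
      · exact Or.inr (Or.inl ⟨ht, c2⟩)
      · exact Or.inr (Or.inr ⟨ht, hh (not_le.1 c1) (not_le.1 c2)⟩)
    have hc : sInf B ∈ B := hBk.sInf_mem hBne
    set c := sInf B
    have hlt : ∀ t ∈ Ico t₀ c, m / 2 < X t ∧ X t < M + 1 ∧ |Y t| < a * M + 1 := by
      intro t ht
      have hn : t ∉ B := fun hh => absurd (csInf_le hBk.bddBelow hh) (not_le.2 ht.2)
      have htI : t ∈ Icc t₀ T := ⟨ht.1, ht.2.le.trans (hBsub hc).2⟩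
      refine ⟨?_, ?_, ?_⟩ <;> by_contra! hh
      · exact hn (Or.inl ⟨htI, hh⟩)
      · exact hn (Or.inr (Or.inl ⟨htI, hh⟩))
      · exact hn (Or.inr (Or.inr ⟨htI, hh⟩))
    have hct : t₀ < c := by
      refine lt_of_le_of_ne (hBsub hc).1 fun he => ?_
      rw [← he] at hc
      rcases hc with hc | hc | hc
      · have := hc.2
        rw [hX0] at this; linarith
      · have := hc.2
        rw [hX0] at this; linarith
      · have := hc.2
        simp only [hY0] at this; linarith
    have hcT := (hBsub hc).2
    have hsub : Icc t₀ c ⊆ Icc t₀ T := Icc_subset_Icc_right hcT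
    have hXpos : ∀ t ∈ Icc t₀ c, 0 < X t := by
      intro t ht
      have : m / 2 ≤ X t := by
        rcases ht.2.lt_or_eq with h1 | h1
        · exact (hlt t ⟨ht.1, h1⟩).1.le
        · rw [h1]
          have hcl : c ∈ closure (Ico t₀ c) := by
            rw [closure_Ico hct.ne]; exact ⟨hct.le, le_rfl⟩
          exact ContinuousWithinAt.closure_le hcl continuousWithinAt_const
            ((hXc c (hBsub hc)).mono (Ico_subset_Icc_self.trans hsub))
            fun t ht => (hlt t ht).1.le
      linarith
    obtain ⟨j1, j2, j3⟩ := apriori_s8 (x := X) (y := Y) (b := c) ha hq hμ hs hε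
      (hXc.mono hsub) (hYc.mono hsub)
      (fun t ht => by
        obtain ⟨k1, k2, k3⟩ := hlt t ⟨ht.1.le, ht.2⟩
        exact hEF t ⟨ht.1, ht.2.trans_le hcT⟩ k1.le k2.le k3.le)
      hXpos hcT hT (by unfold efEnergy at hE ⊢; rwa [hX0, hY0]) c ⟨hct.le, le_rfl⟩
    rw [hX0] at j2 j3
    rw [← hm] at j1
    rw [← hM] at j2 j3
    rcases hc with hc | hc | hc
    · have := hc.2; linarith
    · have := hc.2; linarith
    · have : a * M + 1 ≤ |Y c| := hc.2
      linarith
  refine ⟨X, Y, fun t ht => ?_, fun t ht => ?_⟩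
  · obtain ⟨k1, k2, k3⟩ := hgood t (Ioo_subset_Icc_self ht)
    exact hEF t ht k1.le k2.le k3.le
  -- on `[t₀, t]` the given solution stays in the box, hence also solves the truncated system
  · obtain ⟨K, hK⟩ := truncField_lipschitz (a := a) (q := q) (Y := a * M + 1) hμ
      (half_pos hm0) (show m / 2 ≤ M + 1 by linarith) hT
    have htT : t ≤ T := ht.2.le.trans hbT
    have hd : ∀ τ ∈ Icc t₀ t, HasDerivAt (fun τ => (x τ, y τ))
        (truncField a q μ s (m / 2) (M + 1) (a * M + 1) τ (x τ, y τ)) τ := by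
      intro τ hτ
      obtain ⟨k1, k2, k3⟩ := hbox t ht.2 τ hτ
      have hh := h τ ⟨hτ.1, hτ.2.trans_lt ht.2⟩
      rw [truncField_eq (by simp only; linarith) (by simp only; linarith)
        (by simp only; linarith)]
      exact hh.1.prodMk hh.2.1
    have := ODE_solution_unique_of_mem_Icc_right (s := fun _ => univ) (a := t₀) (b := t)
      (f := α) (g := fun τ => (x τ, y τ)) (K := K)
      (v := truncField a q μ s (m / 2) (M + 1) (a * M + 1))
      (fun τ hτ => (hK τ (hτ.2.le.trans htT)).lipschitzOnWith)
      (hαc.mono (Icc_subset_Icc_right htT))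
      (fun τ hτ => (hα τ ⟨hτ.1, hτ.2.le.trans htT⟩).mono_of_mem_nhdsWithin
        (mem_of_superset (Icc_mem_nhdsGE (hτ.2.trans_le htT)) (Icc_subset_Icc_left hτ.1)))
      (fun _ _ => mem_univ _)
      (fun τ hτ => (hd τ hτ).continuousAt.continuousWithinAt)
      (fun τ hτ => (hd τ (Ico_subset_Icc_self hτ)).hasDerivWithinAt)
      (fun _ _ => mem_univ _) hα0 (x := t) ⟨ht.1.le, le_rfl⟩
    simp [hX, this]

/-! ### Change of variables -/

/-- The Emden–Fowler transform `x t = exp (a t) * u (exp t)` of a radial solution, with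
`a = (n - 2) / 2`, together with its derivative, solves the Emden–Fowler system. -/
lemma efAt_of_radial {n : ℕ} {s μ q R t : ℝ} {u : ℝ → ℝ} (hn : 3 ≤ n)
    (hq : q = twoStarS n s - 1) (hu : IsRadialSol n s μ q (Ioo 0 R) u) (ht : exp t < R) :
    EFAt (((n : ℝ) - 2) / 2) q μ s (fun t => exp ((((n : ℝ) - 2) / 2) * t) * u (exp t))
      (fun t => (((n : ℝ) - 2) / 2) * exp ((((n : ℝ) - 2) / 2) * t) * u (exp t) +
        exp ((((n : ℝ) - 2) / 2) * t) * (exp t * deriv u (exp t))) t := by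
  have hn' : (3 : ℝ) ≤ n := by exact_mod_cast hn
  obtain ⟨a, ha⟩ : ∃ a : ℝ, ((n : ℝ) - 2) / 2 = a := ⟨_, rfl⟩
  -- the exponent `q` is critical, which makes the transformed nonlinearity homogeneous in `r`
  have haq : a * q = a + 2 - s := by
    rw [hq, ← ha]; unfold twoStarS
    have : (n : ℝ) - 2 ≠ 0 := by linarith
    field_simp
    ring
  have hn1 : (n : ℝ) - 1 = 2 * a + 1 := by linarith
  obtain ⟨h1, h2, h3⟩ := hu
  have hmem : exp t ∈ Ioo 0 R := ⟨exp_pos t, ht⟩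
  have hnhds := isOpen_Ioo.mem_nhds hmem
  have hu0 := h2 _ hmem
  have hdu : HasDerivAt u (deriv u (exp t)) (exp t) :=
    ((h1.contDiffAt hnhds).differentiableAt (by norm_num)).hasDerivAt
  have hddu : HasDerivAt (deriv u) (deriv (deriv u) (exp t)) (exp t) := by
    have h5 : ContDiffOn ℝ (1 + 1) u (Ioo 0 R) := by
      rw [one_add_one_eq_two]; exact h1
    have := ((contDiffOn_succ_iff_deriv_of_isOpen isOpen_Ioo).1 h5).2.2
    exact ((this.contDiffAt hnhds).differentiableAt one_ne_zero).hasDerivAt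
  have he := Real.hasDerivAt_exp t
  have hea : HasDerivAt (fun t => exp (a * t)) (exp (a * t) * (a * 1)) t :=
    ((hasDerivAt_id t).const_mul a).exp
  have hue := hdu.comp t he
  have hdue := hddu.comp t he
  rw [ha]
  refine ⟨(hea.mul hue).congr_deriv (by simp only [Function.comp]; ring),
    (((hea.const_mul a).mul hue).add (hea.mul (he.mul hdue))).congr_deriv ?_, by positivity⟩
  have hE := h3 _ hmem
  unfold radialEq at hE
  rw [← hq, hn1] at hE
  have e1 : (exp (a * t) * u (exp t)) ^ q
      = exp (a * t) * exp t ^ 2 * exp (-(s * t)) * u (exp t) ^ q := by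
    rw [mul_rpow (exp_pos _).le hu0.le, ← exp_mul, pow_two, ← exp_add, ← exp_add, ← exp_add]
    congr 2
    linear_combination t * haq
  have e2 : exp t ^ (-s) = exp (-(s * t)) := by
    rw [← exp_mul]; ring_nf
  have e3 : exp (s * t) * exp (-(s * t)) = 1 := by rw [← exp_add]; simp
  simp only [Function.comp, Pi.mul_apply] at *
  rw [e1]
  rw [e2] at hE
  generalize exp (-(s * t)) = P at *
  generalize exp (s * t) = Q at *
  have e4 := exp_pos t
  generalize exp t = r at *
  generalize u r ^ q = U at *
  generalize exp (a * t) = W at *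
  field_simp at hE
  linear_combination W * r * hE - μ * W * r ^ 2 * U * e3

lemma contDiffOn_two_of_hasDerivAt_s8 {f g h : ℝ → ℝ} {S : Set ℝ} (hS : IsOpen S)
    (hf : ∀ r ∈ S, HasDerivAt f (g r) r) (hg : ∀ r ∈ S, HasDerivAt g (h r) r)
    (hh : ContinuousOn h S) : ContDiffOn ℝ 2 f S := by
  have key : ∀ {f g : ℝ → ℝ} {k : ℕ}, (∀ r ∈ S, HasDerivAt f (g r) r) →
      ContDiffOn ℝ k g S → ContDiffOn ℝ (k + 1) f S := by
    intro f g k hf hg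
    rw [contDiffOn_succ_iff_deriv_of_isOpen hS]
    refine ⟨fun r hr => (hf r hr).differentiableAt.differentiableWithinAt, by simp, ?_⟩
    exact hg.congr fun r hr => (hf r hr).deriv
  have h0 : ContDiffOn ℝ (0 : ℕ) h S := by
    simpa using (contDiffOn_zero (𝕜 := ℝ)).2 hh
  have h1 := key hg h0
  have h2 := key (k := 1) hf (by simpa using h1)
  simpa [one_add_one_eq_two] using h2

/-- The inverse transform `r ^ (-a) * X (log r)` of a solution of the Emden–Fowler system is a radial
solution. -/
lemma radial_of_efAt {n : ℕ} {s μ q t₀ T : ℝ} {X Y : ℝ → ℝ} (hn : 3 ≤ n)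
    (hq1 : 1 < q) (hq : q = twoStarS n s - 1)
    (h : ∀ t ∈ Ioo t₀ T, EFAt (((n : ℝ) - 2) / 2) q μ s X Y t) :
    IsRadialSol n s μ q (Ioo (exp t₀) (exp T))
      (fun r => r ^ (-(((n : ℝ) - 2) / 2)) * X (log r)) := by
  have hn' : (3 : ℝ) ≤ n := by exact_mod_cast hn
  obtain ⟨a, ha⟩ : ∃ a : ℝ, ((n : ℝ) - 2) / 2 = a := ⟨_, rfl⟩
  -- the exponent `q` is critical, which makes the transformed nonlinearity homogeneous in `r`
  have haq : a * q = a + 2 - s := by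
    rw [hq, ← ha]; unfold twoStarS
    have : (n : ℝ) - 2 ≠ 0 := by linarith
    field_simp
    ring
  have hn1 : (n : ℝ) - 1 = 2 * a + 1 := by linarith
  rw [ha] at h ⊢
  set S := Ioo (exp t₀) (exp T) with hS
  have hpos : ∀ r ∈ S, 0 < r := fun r hr => (exp_pos _).trans hr.1
  have hlog : ∀ r ∈ S, log r ∈ Ioo t₀ T := fun r hr =>
    ⟨(lt_log_iff_exp_lt (hpos r hr)).2 hr.1, (log_lt_iff_lt_exp (hpos r hr)).2 hr.2⟩
  set V : ℝ → ℝ := fun r => r ^ (-a) * X (log r) with hV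
  set V1 : ℝ → ℝ := fun r => r ^ (-a - 1) * (Y (log r) - a * X (log r)) with hV1
  set Z : ℝ → ℝ := fun t => a ^ 2 * X t - (1 - μ * exp (s * t)) * X t ^ q with hZ
  set V2 : ℝ → ℝ := fun r => r ^ (-a - 1 - 1) *
    (Z (log r) - (2 * a + 1) * Y (log r) + a * (a + 1) * X (log r)) with hV2
  have d1 : ∀ r ∈ S, HasDerivAt V (V1 r) r := by
    intro r hr
    have hr0 := hpos r hr
    refine ((hasDerivAt_rpow_const (Or.inl hr0.ne')).mul
      ((h _ (hlog r hr)).1.comp r (hasDerivAt_log hr0.ne'))).congr_deriv ?_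
    simp only [hV1, Function.comp, rpow_sub_one hr0.ne']
    field_simp
    ring
  have d2 : ∀ r ∈ S, HasDerivAt V1 (V2 r) r := by
    intro r hr
    have hr0 := hpos r hr
    have hh := h _ (hlog r hr)
    have hl := hasDerivAt_log hr0.ne'
    refine ((hasDerivAt_rpow_const (Or.inl hr0.ne')).mul
      ((hh.2.1.comp r hl).sub ((hh.1.comp r hl).const_mul a))).congr_deriv ?_
    simp only [hV2, hZ, Function.comp, Pi.sub_apply, rpow_sub_one hr0.ne']
    field_simp
    ring
  have hXc : ContinuousOn (fun r => X (log r)) S := fun r hr =>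
    ((h _ (hlog r hr)).1.continuousAt.comp (continuousAt_log (hpos r hr).ne')).continuousWithinAt
  have hYc : ContinuousOn (fun r => Y (log r)) S := fun r hr =>
    ((h _ (hlog r hr)).2.1.continuousAt.comp (continuousAt_log (hpos r hr).ne')).continuousWithinAt
  have hlc : ContinuousOn log S := fun r hr =>
    (continuousAt_log (hpos r hr).ne').continuousWithinAt
  have c2 : ContinuousOn V2 S := by
    have hXq : ContinuousOn (fun r => X (log r) ^ q) S :=
      hXc.rpow_const fun r hr => Or.inr (by linarith)
    have hrp : ContinuousOn (fun r : ℝ => r ^ (-a - 1 - 1)) S :=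
      continuousOn_id.rpow_const fun r hr => Or.inl (hpos r hr).ne'
    have hec : ContinuousOn (fun r => exp (s * log r)) S := (continuousOn_const.mul hlc).rexp
    exact hrp.mul ((((continuousOn_const.mul hXc).sub
      ((continuousOn_const.sub (continuousOn_const.mul hec)).mul hXq)).sub
        (continuousOn_const.mul hYc)).add (continuousOn_const.mul hXc))
  refine ⟨contDiffOn_two_of_hasDerivAt_s8 isOpen_Ioo d1 d2 c2, fun r hr => ?_, fun r hr => ?_⟩
  · exact mul_pos (rpow_pos_of_pos (hpos r hr) _) (h _ (hlog r hr)).2.2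
  · have hr0 := hpos r hr
    have hX0 := (h _ (hlog r hr)).2.2
    have hdd : deriv (deriv V) r = V2 r := by
      have : deriv V =ᶠ[𝓝 r] V1 := by
        filter_upwards [isOpen_Ioo.mem_nhds hr] with r' hr'
        exact (d1 r' hr').deriv
      rw [this.deriv_eq, (d2 r hr).deriv]
    unfold radialEq
    rw [hdd, (d1 r hr).deriv, ← hq, hn1]
    have e1 : V r ^ q = r ^ (-a - 1 - 1) * r ^ s * X (log r) ^ q := by
      rw [hV]
      simp only
      rw [mul_rpow (rpow_nonneg hr0.le _) hX0.le, ← rpow_mul hr0.le, ← rpow_add hr0]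
      congr 2
      linear_combination -haq
    have e2 : r ^ (-s) * r ^ s = 1 := by rw [← rpow_add hr0]; simp
    have e3 : exp (s * log r) = r ^ s := by rw [rpow_def_of_pos hr0]; ring_nf
    rw [e1]
    simp only [hV2, hV1, hZ, e3]
    rw [rpow_sub_one hr0.ne' (-a - 1)]
    generalize X (log r) ^ q = U
    generalize r ^ s = Q at *
    generalize r ^ (-s) = P at *
    field_simp
    linear_combination r ^ (-a - 1) * U * e2

/-- Being a radial solution is a local property. -/
lemma IsRadialSol.congr_nhds {n : ℕ} {s μ q r : ℝ} {I : Set ℝ} {u v : ℝ → ℝ}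
    (hI : IsOpen I) (hr : r ∈ I) (hu : IsRadialSol n s μ q I u) (h : v =ᶠ[𝓝 r] u) :
    ContDiffAt ℝ 2 v r ∧ 0 < v r ∧ radialEq n s μ q v r := by
  obtain ⟨h1, h2, h3⟩ := hu
  refine ⟨(h1.contDiffAt (hI.mem_nhds hr)).congr_of_eventuallyEq h, h.eq_of_nhds ▸ h2 r hr, ?_⟩
  have := h3 r hr
  unfold radialEq at this ⊢
  rwa [h.eq_of_nhds, h.deriv_eq, h.deriv.deriv_eq]

/-! ### The extension theorem -/

theorem stmt8 (n : ℕ) (hn : 3 ≤ n) (s μ q : ℝ) (hs0 : 0 < s) (hs2 : s < 2)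
    (hμ : 0 < μ) (hq : q = twoStarS n s - 1)
    (R : ℝ) (hR : 0 < R) (u : ℝ → ℝ)
    (hu : IsRadialSol n s μ q (Set.Ioo 0 R) u)
    (hbd : UpliBound n u) :
    ∃ v : ℝ → ℝ, IsRadialSol n s μ q (Set.Ioo 0 (μ ^ (-(1 / s)))) v ∧
      Set.EqOn v u (Set.Ioo 0 (min R (μ ^ (-(1 / s))))) := by
  
  set r₀ := μ ^ (-(1 / s)) with hr₀
  have hr₀pos : 0 < r₀ := rpow_pos_of_pos hμ _
  rcases le_or_gt r₀ R with hle | hRr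
  · have hsub : Ioo 0 r₀ ⊆ Ioo 0 R := Ioo_subset_Ioo_right hle
    exact ⟨u, ⟨hu.1.mono hsub, fun r hr => hu.2.1 r (hsub hr), fun r hr => hu.2.2 r (hsub hr)⟩,
      fun _ _ => rfl⟩
  have hn' : (3 : ℝ) ≤ n := by exact_mod_cast hn
  have ha : 0 < ((n : ℝ) - 2) / 2 := by linarith
  have hq1 : 1 < q := by
    rw [hq]; unfold twoStarS
    rw [lt_sub_iff_add_lt, lt_div_iff₀ (by linarith)]
    linarith
  set a := ((n : ℝ) - 2) / 2 with haa
  set b := log R with hb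
  set T := log r₀ with hTdef
  have hexpb : exp b = R := exp_log hR
  have hexpT : exp T = r₀ := exp_log hr₀pos
  have hbT : b ≤ T := log_le_log hR hRr.le
  -- `T = log (μ ^ (-1 / s))` is the time at which the coefficient `1 - μ exp (s t)` vanishes
  have hT : ∀ t ≤ T, μ * exp (s * t) ≤ 1 := by
    intro t ht
    have h1 : exp (s * T) = μ⁻¹ := by
      rw [mul_comm, exp_mul, hexpT, hr₀, ← rpow_mul hμ.le]
      rw [show -(1 / s) * s = -1 by field_simp, rpow_neg_one]
    calc μ * exp (s * t) ≤ μ * exp (s * T) := by gcongr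
      _ = 1 := by rw [h1, mul_inv_cancel₀ hμ.ne']
  set x : ℝ → ℝ := fun t => exp (a * t) * u (exp t) with hx
  set y : ℝ → ℝ := fun t => a * exp (a * t) * u (exp t) + exp (a * t) * (exp t * deriv u (exp t))
  have hEF : ∀ t < b, EFAt a q μ s x y t := fun t ht =>
    efAt_of_radial hn hq hu (by rw [← hexpb]; exact exp_lt_exp.2 ht)
  obtain ⟨M, t₁, hM⟩ : ∃ M t₁, ∀ t < t₁, x t ≤ M := by
    obtain ⟨c, hc1, hc2⟩ := exists_between hbd
    have hev := eventually_lt_of_limsup_lt hc1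
    obtain ⟨d, hd, hsub⟩ := mem_nhdsGT_iff_exists_Ioo_subset.1 hev
    refine ⟨c.toReal, log d, fun t ht => ?_⟩
    have h1 : exp t ∈ Ioo 0 d := ⟨exp_pos t, (lt_log_iff_exp_lt hd).1 ht⟩
    have h2 := hsub h1
    simp only [mem_ofPred_eq] at h2
    have h3 := (ENNReal.ofReal_le_iff_le_toReal hc2.ne).1 h2.le
    rw [hx]
    simp only
    rw [mul_comm a, exp_mul]
    exact h3
  have hE0 : ∀ t < b, efEnergy a q μ s x y t ≤ 0 := fun t ht =>
    efEnergy_nonpos hq1 hμ hs0 hEF hM ht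
  -- any time before `b` will do: strict monotonicity turns `≤ 0` into `< 0`
  set t₀ := b - 1 with ht₀
  have hEneg : efEnergy a q μ s x y t₀ < 0 := by
    have hanti : StrictAntiOn (efEnergy a q μ s x y) (Iio b) :=
      strictAntiOn_efEnergy (convex_Iio b) hq1 hμ hs0
        (fun t ht => (hEF t ht).1.continuousAt.continuousWithinAt)
        (fun t ht => (hEF t ht).2.1.continuousAt.continuousWithinAt)
        (fun t ht => hEF t (interior_subset (s := Iio b) ht))
    have h1 : b - 2 < b := by linarith
    have h2 : t₀ < b := by linarith
    exact (hanti h1 h2 (by linarith)).trans_le (hE0 _ h1)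
  obtain ⟨X, Y, hXY, hXx⟩ := exists_extension ha hq1 hμ hs0 (neg_pos.2 hEneg)
    (show t₀ < b by linarith) hbT hT (fun t ht => hEF t ht.2) (neg_neg _).ge
  have hrad := radial_of_efAt hn hq1 hq hXY
  rw [← haa, hexpT] at hrad
  set V : ℝ → ℝ := fun r => r ^ (-a) * X (log r) with hV
  have ht₀R : exp t₀ < R := by rw [← hexpb]; exact exp_lt_exp.2 (by linarith)
  have hVu : ∀ r ∈ Ioo (exp t₀) R, V r = u r := by
    intro r hr
    have hr0 : 0 < r := (exp_pos _).trans hr.1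
    have hl : log r ∈ Ioo t₀ b := ⟨(lt_log_iff_exp_lt hr0).2 hr.1, log_lt_log hr0 hr.2⟩
    simp only [hV, hXx _ hl, hx]
    rw [exp_log hr0, mul_comm a, exp_mul, exp_log hr0, ← mul_assoc, ← rpow_add hr0]
    simp
  -- `V` agrees with `u` on `(exp t₀, R)`, so the glued function is locally equal to `u` or to `V`
  set v : ℝ → ℝ := fun r => if r < R then u r else V r with hv
  have hall : ∀ r ∈ Ioo 0 r₀, ContDiffAt ℝ 2 v r ∧ 0 < v r ∧ radialEq n s μ q v r := by
    intro r hr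
    rcases lt_or_ge r R with hlt | hge
    · refine hu.congr_nhds isOpen_Ioo ⟨hr.1, hlt⟩ ?_
      filter_upwards [Iio_mem_nhds hlt] with r' hr'
      exact if_pos hr'
    · have hrt : exp t₀ < r := ht₀R.trans_le hge
      refine hrad.congr_nhds isOpen_Ioo ⟨hrt, hr.2⟩ ?_
      filter_upwards [Ioi_mem_nhds hrt] with r' hr'
      by_cases hc : r' < R
      · simp only [hv, if_pos hc]
        exact (hVu r' ⟨hr', hc⟩).symm
      · simp only [hv, if_neg hc]
  refine ⟨v, ⟨fun r hr => (hall r hr).1.contDiffWithinAt, fun r hr => (hall r hr).2.1,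
    fun r hr => (hall r hr).2.2⟩, fun r hr => ?_⟩
  exact if_pos (hr.2.trans_le (min_le_left _ _))
end
end
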